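/- (Infinitesimal rigidity of polytope frameworks; Alexandrov, Whiteley) Let P be a polytope of dimension d ≥ 3 in ℝ^d with vertex set V(P), fix for each 2-dimensional face of P a triangulation using only its vertices, and let E be the set of edges of P together with the diagonals of these triangulations. If w : V(P) → ℝ^d satisfies ⟨w(u) − w(v), u − v⟩ = 0 for every {u,v} ∈ E, then there exist a skew-symmetric linear map S : ℝ^d → ℝ^d and a vector b ∈ ℝ^d such that w(v) = S(v) + b for every vertex v of P. -/

import Mathlib

open Classical Polynomial

section PolytopeDefs

variable {V : Type*} [AddCommGroup V] [Module ℝ V]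

/-- A polytope: the convex hull of finitely many points. -/
def IsPolytope (P : Set V) : Prop := ∃ S : Finset V, P = convexHull ℝ (S : Set V)

/-- Faces of a polytope (or of a cone): the set itself, the empty face, and the
sets of maximizers of linear functionals (equivalently, intersections with
supporting hyperplanes). -/
def IsFace (P F : Set V) : Prop :=
  F = P ∨ F = ∅ ∨ ∃ l : V →ₗ[ℝ] ℝ, F = {x | x ∈ P ∧ ∀ y ∈ P, l y ≤ l x}

/-- Dimension of a polytope: the dimension of its affine span, with the
convention `pdim ∅ = -1`. -/
noncomputable def pdim (P : Set V) : ℤ :=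
  if P = ∅ then -1 else (Module.finrank ℝ (affineSpan ℝ P).direction : ℤ)

/-- The `g`-truncation: from the toric `h`-polynomial of a `d`-dimensional
polytope to its toric `g`-polynomial, via `g_k = h_k - h_{k-1}` for
`0 ≤ k ≤ d/2`, with `h_{-1} = 0`. -/
noncomputable def truncG (d : ℤ) (h : Polynomial ℚ) : Polynomial ℚ :=
  ∑ k ∈ Finset.range (d.toNat / 2 + 1),
    Polynomial.C (h.coeff k - if k = 0 then 0 else h.coeff (k - 1)) * Polynomial.X ^ k

/-- Fuelled recursion computing the toric `h`-polynomial of the interval `[F,G]`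
of a face lattice (with `F` playing the role of the empty face):
`h([F,G],t) = ∑_{F ≤ G' < G} g([F,G'],t) · (t-1)^{dim G - dim G' - 1}`. -/
noncomputable def relHAux : ℕ → Set V → Set V → Polynomial ℚ
  | 0, _, _ => 1
  | n + 1, F, G =>
      if G = F then 1
      else ∑ᶠ G' ∈ {G' : Set V | IsFace G G' ∧ F ⊆ G' ∧ G' ≠ G},
        truncG (pdim G' - pdim F - 1) (relHAux n F G') *
          (Polynomial.X - 1) ^ (pdim G - pdim G' - 1).toNat

/-- The toric `h`-polynomial of the interval `[F,G]` in a face lattice. -/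
noncomputable def relH (F G : Set V) : Polynomial ℚ := relHAux (pdim G + 1).toNat F G

/-- The toric `g`-polynomial of the interval `[F,G]` in a face lattice;
`relG F P` is the polynomial `g(P/F, t)`. -/
noncomputable def relG (F G : Set V) : Polynomial ℚ :=
  truncG (pdim G - pdim F - 1) (relH F G)

/-- The toric `h`-polynomial `h(P,t)` of a polytope `P`. -/
noncomputable def toricH (P : Set V) : Polynomial ℚ := relH ∅ P

/-- The toric `g`-polynomial `g(P,t)` of a polytope `P`. -/
noncomputable def toricG (P : Set V) : Polynomial ℚ := relG ∅ P

end PolytopeDefs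
section FrameworkDefs

variable {d : ℕ}

/-- A triangulation of a 2-dimensional face `G` using only its vertices: a
finite collection of affinely independent triples of vertices of `G` whose
triangles cover `G` and such that any two triangles meet in the convex hull of
their common vertices. -/
def IsTriangulation (G : Set (Fin d → ℝ)) (T : Finset (Finset (Fin d → ℝ))) : Prop :=
  (∀ t ∈ T, t.card = 3 ∧ (∀ v ∈ t, IsFace G {v}) ∧
    AffineIndependent ℝ (fun x : (t : Set (Fin d → ℝ)) => (x : Fin d → ℝ))) ∧
  (⋃ t ∈ T, convexHull ℝ (t : Set (Fin d → ℝ))) = G ∧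
  (∀ t ∈ T, ∀ t' ∈ T,
    convexHull ℝ (t : Set (Fin d → ℝ)) ∩ convexHull ℝ (t' : Set (Fin d → ℝ)) =
      convexHull ℝ ((t ∩ t' : Finset (Fin d → ℝ)) : Set (Fin d → ℝ)))

/-- `{u,v}` is an edge of the framework associated to the polytope `P` and the
chosen triangulations `T` of its 2-faces: an edge of `P`, or an edge/diagonal
of the triangulation of a 2-dimensional face of `P`. -/
def FrameEdge (P : Set (Fin d → ℝ)) (T : Set (Fin d → ℝ) → Finset (Finset (Fin d → ℝ)))
    (u v : Fin d → ℝ) : Prop :=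
  u ≠ v ∧ (IsFace P (segment ℝ u v) ∨
    ∃ G : Set (Fin d → ℝ), IsFace P G ∧ pdim G = 2 ∧ ∃ t ∈ T G, u ∈ t ∧ v ∈ t)

end FrameworkDefs

/-!
Call `w` rigid on a set of points if `⟨w u - w v, u - v⟩ = 0` for all pairs `u, v` in it. Once `w`
is rigid on all vertices of a full-dimensional polytope it is a skew map plus a constant, so only
this has to be shown; it is done by induction on the dimension of the faces. Velocities are encoded
as linear functionals, so that no inner product is needed outside `ℝ³`.

* *Polygons.* Interpolate `w` linearly on each triangle. Along the segment between two vertices the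
  component of the interpolation in the direction of the segment is constant on each triangle, hence
  constant.
* *Faces of dimension at least three.* Put the origin inside the polytope and slice by a
  three-dimensional subspace through two given vertices. A vertex of the slice is a convex
  combination of vertices of the polytope and receives the same combination of velocities; rigidity
  on the facets makes the result rigid on each facet of the slice. A generic regular subdivision
  triangulates the surface of the slice without new vertices, and the theorem for triangulated
  convex surfaces in `ℝ³` applies.
* *Triangulated convex surfaces in `ℝ³`.* On each triangle `t` the velocity is `x ↦ ω t × x + b t`.
  Across an edge `vu` the jump of `ω` is `λ (u - v)` and that of `b` is `λ (v × u)` up to sign, with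
  `λ` symmetric in `u, v`. Around a vertex the jumps of `ω` add up to zero, so `λ` is an equilibrium
  stress. With `s v = ⟨w v, v⟩ = ⟨b t, v⟩`, Minkowski's inequality in the link of `v` gives
  `∑ u, λ v u * (s u - s v) ≤ 0`, with equality only if `λ v u = 0` for all `u`. The sum of these
  expressions over `v` vanishes by antisymmetry, so `λ = 0` and all triangles move by the same rigid
  motion.
-/

open scoped Matrix

section LinkOperator

variable {ι : Type*}

/-- The operator `g ↦ (u ↦ ∑ x, c u x (g x - g u l x / l u))` attached to a weighted graph `c` and
a nowhere zero reference function `l`, which it annihilates. For the link of a vertex in a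
fan it computes how much a piecewise linear function bends along the edges at the vertex. -/
noncomputable def linkOperator (V : Finset ι) (c : ι → ι → ℝ) (l : ι → ℝ) :
    (ι → ℝ) →ₗ[ℝ] ι → ℝ where
  toFun g u := ∑ x ∈ V, c u x * (g x - g u * l x / l u)
  map_add' g h := by
    ext u
    simp only [Pi.add_apply, ← Finset.sum_add_distrib]
    exact Finset.sum_congr rfl fun x _ => by ring
  map_smul' r g := by
    ext u
    simp only [Pi.smul_apply, smul_eq_mul, RingHom.id_apply, Finset.mul_sum]
    exact Finset.sum_congr rfl fun x _ => by ring

variable {V : Finset ι} {c : ι → ι → ℝ} {l : ι → ℝ}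

lemma linkOperator_apply (g : ι → ℝ) (u : ι) :
    linkOperator V c l g u = ∑ x ∈ V, c u x * (g x - g u * l x / l u) := rfl

lemma sum_linkOperator_mul_comm (hc : ∀ u x, c u x = c x u) (g h : ι → ℝ) :
    ∑ u ∈ V, linkOperator V c l g u * h u = ∑ u ∈ V, linkOperator V c l h u * g u := by
  have expand (g h : ι → ℝ) : ∑ u ∈ V, linkOperator V c l g u * h u =
      ∑ u ∈ V, ∑ x ∈ V, c u x * (g x * h u) -
        ∑ u ∈ V, ∑ x ∈ V, c u x * (g u * h u * l x / l u) := by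
    simp only [linkOperator_apply, Finset.sum_mul, ← Finset.sum_sub_distrib]
    exact Finset.sum_congr rfl fun u _ => Finset.sum_congr rfl fun x _ => by ring
  rw [expand g h, expand h g, Finset.sum_comm (f := fun u x => c u x * (g x * h u))]
  congr 1 <;> refine Finset.sum_congr rfl fun u _ => Finset.sum_congr rfl fun x _ => ?_
  · rw [hc]; ring
  · ring

lemma two_mul_sum_linkOperator_mul_self (hc : ∀ u x, c u x = c x u)
    (hl : ∀ u x, c u x ≠ 0 → l u ≠ 0) (g : ι → ℝ) :
    2 * ∑ u ∈ V, linkOperator V c l g u * g u =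
      -∑ u ∈ V, ∑ x ∈ V, c u x * (g u * l x - g x * l u) ^ 2 / (l u * l x) := by
  have swap : ∑ u ∈ V, ∑ x ∈ V, c u x * (g x - g u * l x / l u) * g u =
      ∑ u ∈ V, ∑ x ∈ V, c x u * (g u - g x * l u / l x) * g x := Finset.sum_comm
  simp only [linkOperator_apply, Finset.sum_mul]
  rw [two_mul]
  nth_rewrite 2 [swap]
  simp only [← Finset.sum_add_distrib, ← Finset.sum_neg_distrib]
  refine Finset.sum_congr rfl fun u _ => Finset.sum_congr rfl fun x _ => ?_
  rw [← hc u x]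
  by_cases h : c u x = 0
  · simp [h]
  · have hlu := hl u x h
    have hlx := hl x u (by rwa [hc])
    field_simp
    ring

lemma sum_linkOperator_mul_self_nonpos (hc : ∀ u x, c u x = c x u) (hc0 : ∀ u x, 0 ≤ c u x)
    (hl : ∀ u x, c u x ≠ 0 → l u ≠ 0) {g : ι → ℝ}
    (hg : ∀ u x, c u x ≠ 0 → l u * l x < 0 → g u * l x = g x * l u) :
    ∑ u ∈ V, linkOperator V c l g u * g u ≤ 0 ∧
      (∑ u ∈ V, linkOperator V c l g u * g u = 0 → ∀ u ∈ V, linkOperator V c l g u = 0) := by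
  have identity := two_mul_sum_linkOperator_mul_self (V := V) hc hl g
  have term_nonneg : ∀ u x, 0 ≤ c u x * (g u * l x - g x * l u) ^ 2 / (l u * l x) := by
    intro u x
    rcases lt_or_ge (l u * l x) 0 with hneg | hpos
    · by_cases h : c u x = 0
      · simp [h]
      · simp [hg u x h hneg]
    · exact div_nonneg (mul_nonneg (hc0 u x) (sq_nonneg _)) hpos
  have row_nonneg : ∀ u ∈ V, 0 ≤ ∑ x ∈ V, c u x * (g u * l x - g x * l u) ^ 2 / (l u * l x) :=
    fun u _ => Finset.sum_nonneg fun x _ => term_nonneg u x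
  refine ⟨by linarith [Finset.sum_nonneg row_nonneg], fun hzero u hu => ?_⟩
  have total_zero : ∑ u ∈ V, ∑ x ∈ V, c u x * (g u * l x - g x * l u) ^ 2 / (l u * l x) = 0 := by
    linarith
  have row_zero := (Finset.sum_eq_zero_iff_of_nonneg row_nonneg).1 total_zero u hu
  refine Finset.sum_eq_zero fun x hx => ?_
  have term_zero := (Finset.sum_eq_zero_iff_of_nonneg fun x _ => term_nonneg u x).1 row_zero x hx
  by_cases h : c u x = 0
  · simp [h]
  · have hlu := hl u x h
    have hlx := hl x u (by rwa [hc])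
    have : g u * l x - g x * l u = 0 := by simpa [h, hlu, hlx] using term_zero
    have : g x - g u * l x / l u = 0 := by field_simp; linarith
    rw [this, mul_zero]

lemma sum_linkOperator_mul_self_add_sub (hc : ∀ u x, c u x = c x u) {a q X : ι → ℝ}
    (ha : linkOperator V c l a = 0) (horth : ∑ u ∈ V, linkOperator V c l X u * q u = 0) (t τ : ℝ) :
    ∑ u ∈ V, linkOperator V c l (X + t • q - τ • a) u * (X + t • q - τ • a) u =
      ∑ u ∈ V, linkOperator V c l X u * X u + t ^ 2 * ∑ u ∈ V, linkOperator V c l q u * q u := by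
  have hΛ : linkOperator V c l (X + t • q - τ • a) =
      linkOperator V c l X + t • linkOperator V c l q := by
    simp [ha]
  have hXa : ∑ u ∈ V, linkOperator V c l X u * a u = 0 := by
    rw [sum_linkOperator_mul_comm hc, ha]; simp
  have hqa : ∑ u ∈ V, linkOperator V c l q u * a u = 0 := by
    rw [sum_linkOperator_mul_comm hc, ha]; simp
  have hqX : ∑ u ∈ V, linkOperator V c l q u * X u = 0 := by
    rw [sum_linkOperator_mul_comm hc, horth]
  calc _ = ∑ u ∈ V, linkOperator V c l X u * X u
        + t * ∑ u ∈ V, linkOperator V c l X u * q u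
        + t * ∑ u ∈ V, linkOperator V c l q u * X u
        + t ^ 2 * ∑ u ∈ V, linkOperator V c l q u * q u
        - τ * ∑ u ∈ V, linkOperator V c l X u * a u
        - τ * t * ∑ u ∈ V, linkOperator V c l q u * a u := by
        simp only [Finset.mul_sum, ← Finset.sum_add_distrib, ← Finset.sum_sub_distrib, hΛ,
          Pi.add_apply, Pi.sub_apply, Pi.smul_apply, smul_eq_mul]
        exact Finset.sum_congr rfl fun u _ => by ring
    _ = _ := by rw [horth, hqX, hXa, hqa]; ring

/-- The form `(g, h) ↦ ∑ Λg · h` is negative on functions proportional to `l` where `l` changes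
sign, so we correct `X` by multiples of `q` and of the kernel element `a` until the two functionals
`A` and `B`, which detect the sign changes, vanish. -/
lemma sum_linkOperator_mul_self_nonpos_of_orthogonal (hc : ∀ u x, c u x = c x u)
    (hc0 : ∀ u x, 0 ≤ c u x) (hl : ∀ u x, c u x ≠ 0 → l u ≠ 0) {A B : (ι → ℝ) →ₗ[ℝ] ℝ}
    (hcross : ∀ g, A g = 0 → B g = 0 →
      ∀ u x, c u x ≠ 0 → l u * l x < 0 → g u * l x = g x * l u)
    {a q X : ι → ℝ} (ha : linkOperator V c l a = 0) (hAa : A a ≠ 0) (hAB : A a + B a = 0)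
    (hAq : 0 < A q) (hBq : 0 < B q) (hq : ∀ u ∈ V, 0 < q u)
    (hΛq : ∀ u ∈ V, 0 ≤ linkOperator V c l q u)
    (horth : ∑ u ∈ V, linkOperator V c l X u * q u = 0) :
    ∑ u ∈ V, linkOperator V c l X u * X u ≤ 0 ∧
      (∑ u ∈ V, linkOperator V c l X u * X u = 0 → ∀ u ∈ V, linkOperator V c l X u = 0) := by
  obtain ⟨t, ht⟩ : ∃ t : ℝ, t * (A q + B q) = -(A X + B X) := ⟨_, div_mul_cancel₀ _ (by positivity)⟩
  obtain ⟨τ, hτ⟩ : ∃ τ : ℝ, τ * A a = A X + t * A q := ⟨_, div_mul_cancel₀ _ hAa⟩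
  have hneg := sum_linkOperator_mul_self_nonpos (V := V) hc hc0 hl <| hcross (X + t • q - τ • a)
    (by simp only [map_add, map_sub, map_smul, smul_eq_mul]; linarith)
    (by simp only [map_add, map_sub, map_smul, smul_eq_mul]
        linear_combination ht - τ * hAB + hτ)
  rw [sum_linkOperator_mul_self_add_sub hc ha horth] at hneg
  have hqq : ∀ u ∈ V, 0 ≤ linkOperator V c l q u * q u :=
    fun u hu => mul_nonneg (hΛq u hu) (hq u hu).le
  have hcorrection : 0 ≤ t ^ 2 * ∑ u ∈ V, linkOperator V c l q u * q u :=
    mul_nonneg (sq_nonneg t) (Finset.sum_nonneg hqq)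
  refine ⟨by linarith [hneg.1], fun hXX u hu => ?_⟩
  have hcorrection_zero : t ^ 2 * ∑ u ∈ V, linkOperator V c l q u * q u = 0 := by linarith [hneg.1]
  have hu0 : linkOperator V c l X u + t * linkOperator V c l q u = 0 := by
    simpa [ha] using hneg.2 (by rw [hXX, hcorrection_zero, add_zero]) u hu
  rcases mul_eq_zero.1 hcorrection_zero with ht0 | hsum
  · simpa [pow_eq_zero_iff two_ne_zero |>.1 ht0] using hu0
  · have := (Finset.sum_eq_zero_iff_of_nonneg hqq).1 hsum u hu
    simpa [(mul_eq_zero.1 this).resolve_right (hq u hu).ne'] using hu0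

end LinkOperator

section TripleProduct

/-- The scalar triple product `u · (v × x)`, i.e. the determinant with rows `u`, `v`, `x`. -/
def tripleProduct (u v x : Fin 3 → ℝ) : ℝ := u ⬝ᵥ v ⨯₃ x

lemma tripleProduct_swap_left (u v x : Fin 3 → ℝ) :
    tripleProduct v u x = -tripleProduct u v x := by
  simp only [tripleProduct, cross_apply, Matrix.vec3_dotProduct, Matrix.cons_val]
  ring

lemma tripleProduct_swap_right (u v x : Fin 3 → ℝ) :
    tripleProduct u x v = -tripleProduct u v x := by
  rw [tripleProduct, tripleProduct, ← cross_anticomm, dotProduct_neg]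

lemma cross_dotProduct (u v x : Fin 3 → ℝ) : u ⨯₃ v ⬝ᵥ x = tripleProduct u v x := by
  rw [dotProduct_comm, triple_product_permutation, tripleProduct]

lemma tripleProduct_smul_eq (u v x y : Fin 3 → ℝ) :
    tripleProduct u v x • y =
      tripleProduct y v x • u + tripleProduct u y x • v + tripleProduct u v y • x := by
  ext i
  fin_cases i <;>
  · simp only [tripleProduct, cross_apply, Matrix.vec3_dotProduct, Matrix.cons_val, Pi.add_apply,
      Pi.smul_apply, smul_eq_mul, Fin.zero_eta, Fin.mk_one, Fin.reduceFinMk]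
    ring

variable {v u x : Fin 3 → ℝ}

lemma exists_eq_smul_add_smul_add_smul (h : tripleProduct v u x ≠ 0) (y : Fin 3 → ℝ) :
    ∃ a b : ℝ, y = a • v + b • u + (tripleProduct v u y / tripleProduct v u x) • x := by
  refine ⟨tripleProduct y u x / tripleProduct v u x, tripleProduct v y x / tripleProduct v u x, ?_⟩
  rw [← smul_right_inj h, tripleProduct_smul_eq]
  simp only [smul_add, smul_smul, mul_div_cancel₀ _ h]

lemma eq_zero_of_dotProduct_eq_zero (h : tripleProduct v u x ≠ 0) {z : Fin 3 → ℝ}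
    (hv : z ⬝ᵥ v = 0) (hu : z ⬝ᵥ u = 0) (hx : z ⬝ᵥ x = 0) : z = 0 := by
  obtain ⟨a, b, hz⟩ := exists_eq_smul_add_smul_add_smul h z
  rw [← dotProduct_self_eq_zero]
  nth_rewrite 2 [hz]
  simp [dotProduct_add, dotProduct_smul, hv, hu, hx]

lemma tripleProduct_ne_zero_of_linearIndependent
    (h : LinearIndependent ℝ ![v, u, x]) : tripleProduct v u x ≠ 0 := by
  rw [tripleProduct, triple_product_eq_det]
  exact (Matrix.isUnit_iff_isUnit_det _).1
    (Matrix.linearIndependent_rows_iff_isUnit.1 h) |>.ne_zero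

lemma eq_smul_of_cross_eq_zero {d z : Fin 3 → ℝ} (hz : z ≠ 0) (h : d ⨯₃ z = 0) :
    ∃ r : ℝ, d = r • z := by
  have hzz : z ⬝ᵥ z ≠ 0 := by simpa using hz
  refine ⟨(d ⬝ᵥ z) / (z ⬝ᵥ z), ?_⟩
  have := cross_cross_eq_smul_sub_smul d z z
  rw [h, map_zero, LinearMap.zero_apply, eq_comm, sub_eq_zero] at this
  rw [← smul_right_inj hzz, smul_smul, mul_div_cancel₀ _ hzz, this]

lemma eq_smul_add_smul_cross {l z : Fin 3 → ℝ} (hlv : l ⨯₃ v ≠ 0) (hv : l ⬝ᵥ v = 0)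
    (hz : l ⬝ᵥ z = 0) : ∃ ρ κ : ℝ, z = ρ • v + κ • l ⨯₃ v := by
  have hvv : v ⬝ᵥ v ≠ 0 := by
    rw [Ne, dotProduct_self_eq_zero]
    rintro rfl
    exact hlv (map_zero _)
  obtain ⟨κ, hκ⟩ : ∃ κ : ℝ, z - (v ⬝ᵥ z / v ⬝ᵥ v) • v = κ • l ⨯₃ v := by
    refine eq_smul_of_cross_eq_zero hlv ?_
    rw [cross_cross_eq_smul_sub_smul', dotProduct_comm _ v, dotProduct_sub, dotProduct_sub,
      dotProduct_smul, dotProduct_smul, hv, hz, smul_eq_mul, div_mul_cancel₀ _ hvv]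
    simp
  exact ⟨_, κ, by rw [← hκ, add_sub_cancel]⟩

end TripleProduct

section Cone

variable {J E : Type*} [AddCommGroup E] [Module ℝ E]

/-- The convex cone spanned by the vectors `p j`, `j ∈ t`. -/
def coneOf (p : J → E) (t : Finset J) : Set E :=
  {y | ∃ α : J → ℝ, (∀ j ∈ t, 0 ≤ α j) ∧ ∑ j ∈ t, α j • p j = y}

variable {p : J → E} {t : Finset J}

lemma smul_mem_coneOf {y : E} (hy : y ∈ coneOf p t) {r : ℝ} (hr : 0 ≤ r) : r • y ∈ coneOf p t := by
  obtain ⟨α, hα, rfl⟩ := hy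
  exact ⟨r • α, fun j hj => mul_nonneg hr (hα j hj), by simp [Finset.smul_sum, mul_smul]⟩

lemma isClosed_coneOf [TopologicalSpace E] [IsTopologicalAddGroup E] [ContinuousSMul ℝ E]
    [T2Space E] (h : LinearIndepOn ℝ p t) : IsClosed (coneOf p t) := by
  have hemb := LinearMap.isClosedEmbedding_of_injective (𝕜 := ℝ)
    (f := Fintype.linearCombination ℝ fun j : t => p j)
    (LinearMap.ker_eq_bot.2 h.fintypeLinearCombination_injective)
  convert hemb.isClosedMap _ (isClosed_Ici (a := (0 : t → ℝ))) using 1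
  ext y
  simp only [coneOf, Set.mem_ofPred_eq, Set.mem_image, Set.mem_Ici, Fintype.linearCombination_apply]
  constructor
  · rintro ⟨α, hα, rfl⟩
    exact ⟨fun j => α j, fun j => hα j j.2, Finset.sum_coe_sort t fun j => α j • p j⟩
  · rintro ⟨α, hα, rfl⟩
    refine ⟨fun j => if hj : j ∈ t then α ⟨j, hj⟩ else 0,
      fun j hj => by simpa [hj] using hα ⟨j, hj⟩, ?_⟩
    rw [← Finset.sum_coe_sort]
    simp

lemma sum_smul_eq_sum_ite_smul {s : Finset J} (hs : s ⊆ t) (β : J → ℝ) (p : J → E) :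
    ∑ j ∈ s, β j • p j = ∑ j ∈ t, (if j ∈ s then β j else 0) • p j := by
  simp only [ite_smul, zero_smul, Finset.sum_ite_mem, Finset.inter_eq_right.2 hs]

lemma sum_smul_eq_of_linearIndepOn {M : Type*} [AddCommGroup M] [Module ℝ M] {s : Finset J}
    (h : LinearIndepOn ℝ p t) (hs : s ⊆ t) {α β : J → ℝ}
    (he : ∑ j ∈ t, α j • p j = ∑ j ∈ s, β j • p j) (g : J → M) :
    ∑ j ∈ t, α j • g j = ∑ j ∈ s, β j • g j := by
  have hcoeff := linearIndepOn_finset_iff.1 h (fun j => α j - if j ∈ s then β j else 0) <| by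
    simp only [sub_smul, Finset.sum_sub_distrib]
    rw [he, sum_smul_eq_sum_ite_smul hs, sub_self]
  rw [sum_smul_eq_sum_ite_smul hs]
  exact Finset.sum_congr rfl fun j hj => by rw [sub_eq_zero.1 (hcoeff j hj)]

end Cone

/-- A complete simplicial fan in `ℝ³` whose rays are spanned by the points `p j`, `j ∈ V`, and
whose maximal cones are spanned by the triples in `T`, such that moreover the triangles
`conv (p '' t)` triangulate the boundary of the convex hull of the `p j`, of which every `p j` is a
vertex. The supporting functionals are normalised to take the value `1` at the support. -/
structure ConvexFan {J : Type*} (V : Finset J) (p : J → Fin 3 → ℝ) (T : Finset (Finset J)) :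
    Prop where
  subset : ∀ t ∈ T, t ⊆ V
  card_eq : ∀ t ∈ T, t.card = 3
  linearIndepOn : ∀ t ∈ T, LinearIndepOn ℝ p t
  inter_subset : ∀ t ∈ T, ∀ t' ∈ T, coneOf p t ∩ coneOf p t' ⊆ coneOf p (t ∩ t')
  exists_mem : ∀ y, ∃ t ∈ T, y ∈ coneOf p t
  exists_normal : ∀ t ∈ T, ∃ n : Fin 3 → ℝ, (∀ j ∈ t, n ⬝ᵥ p j = 1) ∧ ∀ j ∈ V, n ⬝ᵥ p j ≤ 1
  exposed : ∀ v ∈ V, ∃ e : Fin 3 → ℝ, e ⬝ᵥ p v = 1 ∧ ∀ u ∈ V, u ≠ v → e ⬝ᵥ p u < 1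

lemma ne_of_card_triple {J : Type*} {v u x : J} (h : ({v, u, x} : Finset J).card = 3) :
    v ≠ u ∧ v ≠ x ∧ u ≠ x := by
  have hpair (a b : J) : ({a, b} : Finset J).card ≠ 3 := by
    grind [Finset.card_le_two (a := a) (b := b)]
  refine ⟨?_, ?_, ?_⟩ <;> rintro rfl <;> simp [hpair] at h

namespace ConvexFan

variable {J : Type*} {V : Finset J} {p : J → Fin 3 → ℝ} {T : Finset (Finset J)}

lemma ne (h : ConvexFan V p T) {v u x : J} (ht : {v, u, x} ∈ T) : v ≠ u ∧ v ≠ x ∧ u ≠ x :=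
  ne_of_card_triple (h.card_eq _ ht)

/-- Piecewise linear functions on the fan are well defined. -/
lemma sum_smul_eq {M : Type*} [AddCommGroup M] [Module ℝ M] (h : ConvexFan V p T)
    {t t' : Finset J} (ht : t ∈ T) (ht' : t' ∈ T) {α β : J → ℝ} (hα : ∀ j ∈ t, 0 ≤ α j)
    (hβ : ∀ j ∈ t', 0 ≤ β j) (he : ∑ j ∈ t, α j • p j = ∑ j ∈ t', β j • p j) (g : J → M) :
    ∑ j ∈ t, α j • g j = ∑ j ∈ t', β j • g j := by
  obtain ⟨γ, -, hγ⟩ := h.inter_subset t ht t' ht' ⟨⟨α, hα, rfl⟩, ⟨β, hβ, he.symm⟩⟩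
  rw [sum_smul_eq_of_linearIndepOn (h.linearIndepOn t ht) Finset.inter_subset_left hγ.symm,
    sum_smul_eq_of_linearIndepOn (h.linearIndepOn t' ht') Finset.inter_subset_right
      (hγ.trans he).symm]

lemma mem_of_sum_smul_mem_coneOf (h : ConvexFan V p T) {t t' : Finset J} (ht : t ∈ T)
    (ht' : t' ∈ T) {α : J → ℝ} (hα : ∀ j ∈ t, 0 ≤ α j)
    (hmem : ∑ j ∈ t, α j • p j ∈ coneOf p t') {j : J} (hj : j ∈ t) (hpos : 0 < α j) : j ∈ t' := by
  obtain ⟨β, hβ, he⟩ := hmem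
  by_contra hj'
  have := h.sum_smul_eq ht ht' hα hβ he.symm (Pi.single j (1 : ℝ))
  simp only [smul_eq_mul, Pi.single_apply, mul_ite, mul_one, mul_zero, Finset.sum_ite_eq',
    if_pos hj, if_neg hj'] at this
  exact hpos.ne' this

lemma tripleProduct_ne_zero (h : ConvexFan V p T) {v u x : J} (ht : {v, u, x} ∈ T) :
    tripleProduct (p v) (p u) (p x) ≠ 0 := by
  obtain ⟨hvu, hvx, hux⟩ := h.ne ht
  apply tripleProduct_ne_zero_of_linearIndependent
  have hinj : Function.Injective ![v, u, x] := by
    intro i j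
    fin_cases i <;> fin_cases j <;> simp [hvu, hvx, hux, hvu.symm, hvx.symm, hux.symm]
  have hrange : Set.range ![v, u, x] = ({v, u, x} : Finset J) := by ext; simp; tauto
  have hli := LinearIndependent.of_linearIndepOn_range hinj p (hrange ▸ h.linearIndepOn _ ht)
  convert hli
  ext i; fin_cases i <;> rfl

lemma exists_mem_coneOf_and_add_smul_mem (h : ConvexFan V p T) (y z : Fin 3 → ℝ) :
    ∃ t ∈ T, y ∈ coneOf p t ∧ ∃ ε > (0 : ℝ), y + ε • z ∈ coneOf p t := by
  have hfreq : ∃ t ∈ T, ∃ᶠ ε : ℝ in nhdsWithin 0 (Set.Ioi 0), y + ε • z ∈ coneOf p t := by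
    by_contra! hcon
    obtain ⟨ε, hε⟩ := ((Filter.eventually_all_finset T).2 hcon).exists
    obtain ⟨t, ht, hmem⟩ := h.exists_mem (y + ε • z)
    exact hε t ht hmem
  obtain ⟨t, ht, hfreq⟩ := hfreq
  refine ⟨t, ht, ?_, ?_⟩
  · have htendsto : Filter.Tendsto (fun ε : ℝ => y + ε • z) (nhdsWithin 0 (Set.Ioi 0))
        (nhds y) := by
      have : Continuous fun ε : ℝ => y + ε • z := by fun_prop
      simpa using (this.tendsto 0).mono_left nhdsWithin_le_nhds
    exact (isClosed_coneOf (h.linearIndepOn t ht)).mem_of_frequently_of_tendsto hfreq htendsto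
  · obtain ⟨ε, hmem, hε⟩ := (hfreq.and_eventually self_mem_nhdsWithin).exists
    exact ⟨ε, hε, hmem⟩

end ConvexFan

lemma exists_eq_triple_of_mem {J : Type*} {t : Finset J} (ht : t.card = 3) {v : J} (hv : v ∈ t) :
    ∃ u x, t = {v, u, x} := by
  have hcard : (t.erase v).card = 2 := by rw [Finset.card_erase_of_mem hv, ht]
  obtain ⟨u, x, -, hux⟩ := Finset.card_eq_two.1 hcard
  exact ⟨u, x, by rw [← Finset.insert_erase hv, hux]⟩

lemma exists_eq_triple_of_mem_of_mem {J : Type*} {t : Finset J} (ht : t.card = 3) {v u : J}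
    (hv : v ∈ t) (hu : u ∈ t) (hvu : v ≠ u) : ∃ x, t = {v, u, x} := by
  obtain ⟨a, b, rfl⟩ := exists_eq_triple_of_mem ht hv
  simp only [Finset.mem_insert, Finset.mem_singleton] at hu
  rcases hu with rfl | rfl | rfl
  · exact absurd rfl hvu
  · exact ⟨b, rfl⟩
  · exact ⟨a, by rw [Finset.pair_comm]⟩

lemma sum_triple_ite_smul {J M : Type*} [AddCommMonoid M] [Module ℝ M] {v u x : J} (hvu : v ≠ u)
    (hvx : v ≠ x) (hux : u ≠ x) (a b c : ℝ) (f : J → M) :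
    ∑ j ∈ {v, u, x}, (if j = v then a else if j = u then b else c) • f j =
      a • f v + b • f u + c • f x := by
  rw [Finset.sum_insert (by simp [hvu, hvx]), Finset.sum_pair hux, add_assoc]
  simp [hvu.symm, hvx.symm, hux.symm]

namespace ConvexFan

variable {J : Type*} {V : Finset J} {p : J → Fin 3 → ℝ} {T : Finset (Finset J)} {v u x : J}

lemma mem_coneOf_triple (h : ConvexFan V p T) (ht : {v, u, x} ∈ T) {y : Fin 3 → ℝ} :
    y ∈ coneOf p {v, u, x} ↔
      ∃ a b c : ℝ, 0 ≤ a ∧ 0 ≤ b ∧ 0 ≤ c ∧ a • p v + b • p u + c • p x = y := by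
  obtain ⟨hvu, hvx, hux⟩ := h.ne ht
  constructor
  · rintro ⟨α, hα, rfl⟩
    exact ⟨α v, α u, α x, hα v (by simp), hα u (by simp), hα x (by simp),
      by rw [Finset.sum_insert (by simp [hvu, hvx]), Finset.sum_pair hux, add_assoc]⟩
  · rintro ⟨a, b, c, ha, hb, hc, rfl⟩
    refine ⟨_, fun j _ => ?_, sum_triple_ite_smul hvu hvx hux a b c p⟩
    split_ifs <;> assumption

lemma mem_of_triple_mem_coneOf (h : ConvexFan V p T) (ht : {v, u, x} ∈ T) {t : Finset J}
    (ht' : t ∈ T) {a b c : ℝ} (ha : 0 ≤ a) (hb : 0 ≤ b) (hc : 0 ≤ c)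
    (hmem : a • p v + b • p u + c • p x ∈ coneOf p t) :
    (0 < a → v ∈ t) ∧ (0 < b → u ∈ t) ∧ (0 < c → x ∈ t) := by
  obtain ⟨hvu, hvx, hux⟩ := h.ne ht
  rw [← sum_triple_ite_smul hvu hvx hux] at hmem
  have key {j : J} := h.mem_of_sum_smul_mem_coneOf ht ht'
    (fun j _ => by split_ifs <;> assumption) hmem (j := j)
  refine ⟨fun h => key (by simp) (by simpa), fun h => key (by simp) ?_, fun h => key (by simp) ?_⟩
  · simpa [hvu.symm]
  · simpa [hvx.symm, hux.symm]

/-- Piecewise linear functions vanishing at `v` are well defined on the link of `v`. -/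
lemma link_sum_eq (h : ConvexFan V p T) {u' x' : J} (ht : {v, u, x} ∈ T)
    (ht' : {v, u', x'} ∈ T) {γ α β γ' α' β' : ℝ} (hα : 0 ≤ α) (hβ : 0 ≤ β) (hα' : 0 ≤ α')
    (hβ' : 0 ≤ β')
    (he : γ • p v + α • p u + β • p x = γ' • p v + α' • p u' + β' • p x') (g : J → ℝ) :
    α * g u + β * g x = α' * g u' + β' * g x' := by
  obtain ⟨hvu, hvx, hux⟩ := h.ne ht
  obtain ⟨hvu', hvx', hux'⟩ := h.ne ht'
  have hγ : 0 ≤ γ + (|γ| + |γ'|) := by linarith [neg_abs_le γ, abs_nonneg γ']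
  have hγ' : 0 ≤ γ' + (|γ| + |γ'|) := by linarith [neg_abs_le γ', abs_nonneg γ]
  have hshift : (γ + (|γ| + |γ'|)) • p v + α • p u + β • p x =
      (γ' + (|γ| + |γ'|)) • p v + α' • p u' + β' • p x' := by
    linear_combination (norm := module) he
  rw [← sum_triple_ite_smul hvu hvx hux, ← sum_triple_ite_smul hvu' hvx' hux'] at hshift
  have := h.sum_smul_eq ht ht' (fun j _ => by split_ifs <;> assumption)
    (fun j _ => by split_ifs <;> assumption) hshift (Function.update g v 0)
  rw [sum_triple_ite_smul hvu hvx hux, sum_triple_ite_smul hvu' hvx' hux'] at this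
  simpa [hvu.symm, hvx.symm, hvu'.symm, hvx'.symm] using this

lemma exists_opposite (h : ConvexFan V p T) (ht : {v, u, x} ∈ T) :
    ∃ x', {v, u, x'} ∈ T ∧
      tripleProduct (p v) (p u) (p x) * tripleProduct (p v) (p u) (p x') < 0 := by
  obtain ⟨t, htT, hy, ε, hε, hyε⟩ := h.exists_mem_coneOf_and_add_smul_mem (p v + p u) (-p x)
  obtain ⟨hv, hu, -⟩ := h.mem_of_triple_mem_coneOf ht htT zero_le_one zero_le_one le_rfl
    (by simpa using hy)
  obtain ⟨x', rfl⟩ := exists_eq_triple_of_mem_of_mem (h.card_eq t htT) (hv one_pos) (hu one_pos)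
    (h.ne ht).1
  obtain ⟨a, b, c, -, -, hc, he⟩ := (h.mem_coneOf_triple htT).1 hyε
  have hne := h.tripleProduct_ne_zero ht
  have hcoord : c * tripleProduct (p v) (p u) (p x') = -ε * tripleProduct (p v) (p u) (p x) := by
    simpa [tripleProduct] using congrArg (tripleProduct (p v) (p u)) he
  refine ⟨x', htT, ?_⟩
  have : 0 < ε * tripleProduct (p v) (p u) (p x) ^ 2 := by positivity
  by_contra! hcon
  have : c * (tripleProduct (p v) (p u) (p x) * tripleProduct (p v) (p u) (p x')) < 0 := by
    linear_combination tripleProduct (p v) (p u) (p x) * hcoord + this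
  exact this.not_ge (mul_nonneg hc hcon)

lemma eq_of_same_side (h : ConvexFan V p T) {x' : J} (ht : {v, u, x} ∈ T) (ht' : {v, u, x'} ∈ T)
    (hside : 0 < tripleProduct (p v) (p u) (p x) * tripleProduct (p v) (p u) (p x')) : x = x' := by
  obtain ⟨a, b, he⟩ := exists_eq_smul_add_smul_add_smul (h.tripleProduct_ne_zero ht') (p x)
  have hpos : 0 ≤ tripleProduct (p v) (p u) (p x) / tripleProduct (p v) (p u) (p x') := by
    rw [← mul_div_mul_right _ _ (h.tripleProduct_ne_zero ht')]
    exact div_nonneg hside.le (mul_self_nonneg _)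
  have hmem : |a| • p v + |b| • p u + (1 : ℝ) • p x ∈ coneOf p {v, u, x'} := by
    refine (h.mem_coneOf_triple ht').2 ⟨|a| + a, |b| + b, _, by linarith [neg_abs_le a],
      by linarith [neg_abs_le b], hpos, ?_⟩
    linear_combination (norm := module) -he
  have := (h.mem_of_triple_mem_coneOf ht ht' (abs_nonneg a) (abs_nonneg b) zero_le_one hmem).2.2
    one_pos
  obtain ⟨-, hvx, hux⟩ := h.ne ht
  simpa [hvx.symm, hux.symm] using this

lemma edge_cases (h : ConvexFan V p T) (v u : J) :
    (∀ x, {v, u, x} ∉ T) ∨ ∃ x x', 0 < tripleProduct (p v) (p u) (p x) ∧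
      tripleProduct (p v) (p u) (p x') < 0 ∧ ∀ y, {v, u, y} ∈ T ↔ y = x ∨ y = x' := by
  have hpair (x x' : J) (ht : {v, u, x} ∈ T) (ht' : {v, u, x'} ∈ T)
      (hpos : 0 < tripleProduct (p v) (p u) (p x))
      (hneg : tripleProduct (p v) (p u) (p x') < 0) (y : J) :
      {v, u, y} ∈ T ↔ y = x ∨ y = x' := by
    refine ⟨fun hy => ?_, by rintro (rfl | rfl) <;> assumption⟩
    rcases (h.tripleProduct_ne_zero hy).lt_or_gt with hy0 | hy0
    · exact Or.inr (h.eq_of_same_side hy ht' (mul_pos_of_neg_of_neg hy0 hneg))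
    · exact Or.inl (h.eq_of_same_side hy ht (mul_pos hy0 hpos))
  rw [or_iff_not_imp_left]
  intro hex
  push Not at hex
  obtain ⟨x, ht⟩ := hex
  obtain ⟨x', ht', hopp⟩ := h.exists_opposite ht
  rcases mul_neg_iff.1 hopp with ⟨hpos, hneg⟩ | ⟨hneg, hpos⟩
  · exact ⟨x, x', hpos, hneg, hpair x x' ht ht' hpos hneg⟩
  · exact ⟨x', x, hpos, hneg, hpair x' x ht' ht hpos hneg⟩

end ConvexFan

section EdgeJump

variable {J M : Type*} [AddCommGroup M] [Module ℝ M]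

/-- The jump across the edge `vu` of a function `f` on the triangles of a triangulation of the
sphere: the value on the triangle to the left of `vu` minus that on the triangle to its right. -/
noncomputable def edgeJump (V : Finset J) (p : J → Fin 3 → ℝ) (T : Finset (Finset J))
    (f : Finset J → M) (v u : J) : M :=
  ∑ x ∈ V, if {v, u, x} ∈ T then (tripleProduct (p v) (p u) (p x)).sign • f {v, u, x} else 0

variable {V : Finset J} {p : J → Fin 3 → ℝ} {T : Finset (Finset J)} {v u : J}

lemma edgeJump_swap (f : Finset J → M) (v u : J) :
    edgeJump V p T f u v = -edgeJump V p T f v u := by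
  rw [edgeJump, edgeJump, ← Finset.sum_neg_distrib]
  refine Finset.sum_congr rfl fun x _ => ?_
  rw [Finset.insert_comm, tripleProduct_swap_left, Real.sign_neg]
  split_ifs <;> simp

lemma sum_edgeJump (f : Finset J → M) (v : J) : ∑ u ∈ V, edgeJump V p T f v u = 0 := by
  have hanti : ∑ u ∈ V, edgeJump V p T f v u = -∑ u ∈ V, edgeJump V p T f v u := by
    conv_lhs => simp only [edgeJump]
    rw [Finset.sum_comm, ← Finset.sum_neg_distrib]
    refine Finset.sum_congr rfl fun u _ => ?_
    rw [edgeJump, ← Finset.sum_neg_distrib]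
    refine Finset.sum_congr rfl fun x _ => ?_
    rw [Finset.pair_comm, tripleProduct_swap_right, Real.sign_neg]
    split_ifs <;> simp
  rw [← smul_eq_zero_iff_right (two_ne_zero (α := ℝ)), two_smul]
  exact add_eq_zero_iff_eq_neg.2 hanti

lemma edgeJump_eq_zero (hvu : ∀ x, {v, u, x} ∉ T) (f : Finset J → M) :
    edgeJump V p T f v u = 0 :=
  Finset.sum_eq_zero fun x _ => if_neg (hvu x)

end EdgeJump

/-- If the vectors `f t` are the gradients of a function that is linear on each cone of a fan, this
is the rate at which that function bends across the ray through `p v` and `p u`: the factor `r` in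
`edgeJump V p T f v u = r • p v ⨯₃ p u`. -/
noncomputable def edgeStress {J : Type*} (V : Finset J) (p : J → Fin 3 → ℝ) (T : Finset (Finset J))
    (f : Finset J → Fin 3 → ℝ) (v u : J) : ℝ :=
  (edgeJump V p T f v u ⬝ᵥ p v ⨯₃ p u) / (p v ⨯₃ p u ⬝ᵥ p v ⨯₃ p u)

/-- The weights of the edges `ux` of the link of `v`. -/
noncomputable def linkWeight {J : Type*} (p : J → Fin 3 → ℝ) (T : Finset (Finset J)) (v u x : J) :
    ℝ :=
  if {v, u, x} ∈ T then |tripleProduct (p v) (p u) (p x)|⁻¹ else 0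

/-- The vectors `f t` are the gradients of the function that is linear on the cones spanned by the
triples `t ∈ T` and takes the values `g j` at the points `p j`. -/
def IsPiecewiseGradient {J : Type*} (p : J → Fin 3 → ℝ) (T : Finset (Finset J))
    (f : Finset J → Fin 3 → ℝ) (g : J → ℝ) : Prop :=
  ∀ t ∈ T, ∀ j ∈ t, f t ⬝ᵥ p j = g j

section EdgeStress

variable {J : Type*} {V : Finset J} {p : J → Fin 3 → ℝ} {T : Finset (Finset J)} {v u x : J}

lemma edgeStress_comm (f : Finset J → Fin 3 → ℝ) (v u : J) :
    edgeStress V p T f v u = edgeStress V p T f u v := by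
  rw [edgeStress, edgeStress, edgeJump_swap, ← cross_anticomm (p u) (p v)]
  simp only [neg_dotProduct, dotProduct_neg, neg_neg]

lemma edgeStress_eq_zero (hvu : ∀ x, {v, u, x} ∉ T) (f : Finset J → Fin 3 → ℝ) :
    edgeStress V p T f v u = 0 := by
  rw [edgeStress, edgeJump_eq_zero hvu, zero_dotProduct, zero_div]

lemma linkWeight_comm (v u x : J) : linkWeight p T v u x = linkWeight p T v x u := by
  rw [linkWeight, linkWeight, Finset.pair_comm, tripleProduct_swap_right, abs_neg]

lemma linkWeight_nonneg (v u x : J) : 0 ≤ linkWeight p T v u x := by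
  rw [linkWeight]; split_ifs <;> positivity

lemma mem_of_linkWeight_ne_zero (h : linkWeight p T v u x ≠ 0) : {v, u, x} ∈ T := by
  by_contra hcon
  exact h (if_neg hcon)

namespace ConvexFan

lemma mem_left (h : ConvexFan V p T) (ht : {v, u, x} ∈ T) : v ∈ V := h.subset _ ht (by simp)

lemma mem_middle (h : ConvexFan V p T) (ht : {v, u, x} ∈ T) : u ∈ V := h.subset _ ht (by simp)

lemma mem_right (h : ConvexFan V p T) (ht : {v, u, x} ∈ T) : x ∈ V := h.subset _ ht (by simp)

lemma cross_ne_zero (h : ConvexFan V p T) (ht : {v, u, x} ∈ T) : p v ⨯₃ p u ≠ 0 := fun h0 =>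
  h.tripleProduct_ne_zero ht (by rw [← cross_dotProduct, h0, zero_dotProduct])

lemma edgeJump_eq_sub {M : Type*} [AddCommGroup M] [Module ℝ M] (h : ConvexFan V p T) {x' : J}
    (hpos : 0 < tripleProduct (p v) (p u) (p x)) (hneg : tripleProduct (p v) (p u) (p x') < 0)
    (hT : ∀ y, {v, u, y} ∈ T ↔ y = x ∨ y = x') (f : Finset J → M) :
    edgeJump V p T f v u = f {v, u, x} - f {v, u, x'} := by
  have hxx' : x ≠ x' := by rintro rfl; exact lt_asymm hpos hneg
  have hx : {v, u, x} ∈ T := (hT x).2 (Or.inl rfl)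
  have hx' : {v, u, x'} ∈ T := (hT x').2 (Or.inr rfl)
  have hsub : {x, x'} ⊆ V := by
    simp [Finset.insert_subset_iff, h.mem_right hx, h.mem_right hx']
  rw [edgeJump, ← Finset.sum_subset hsub, Finset.sum_pair hxx', if_pos hx, if_pos hx',
    Real.sign_of_pos hpos, Real.sign_of_neg hneg, one_smul, neg_one_smul, sub_eq_add_neg]
  intro y _ hy
  exact if_neg (by simpa [hT] using hy)

lemma edgeStress_eq (h : ConvexFan V p T) {f : Finset J → Fin 3 → ℝ} (ht : {v, u, x} ∈ T) {r : ℝ}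
    (hr : edgeJump V p T f v u = r • p v ⨯₃ p u) : edgeStress V p T f v u = r := by
  rw [edgeStress, hr, smul_dotProduct, smul_eq_mul, mul_div_cancel_right₀]
  simpa using h.cross_ne_zero ht

lemma edgeJump_eq_smul_cross (h : ConvexFan V p T) {f : Finset J → Fin 3 → ℝ} {g : J → ℝ}
    (hf : IsPiecewiseGradient p T f g) (v u : J) :
    edgeJump V p T f v u = edgeStress V p T f v u • p v ⨯₃ p u := by
  obtain hno | ⟨y, y', hpos, hneg, hT⟩ := h.edge_cases v u
  · rw [edgeJump_eq_zero hno, edgeStress_eq_zero hno, zero_smul]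
  have hy : {v, u, y} ∈ T := (hT y).2 (Or.inl rfl)
  have hy' : {v, u, y'} ∈ T := (hT y').2 (Or.inr rfl)
  suffices ∃ r : ℝ, edgeJump V p T f v u = r • p v ⨯₃ p u by
    obtain ⟨r, hr⟩ := this
    rw [hr, h.edgeStress_eq hy hr]
  refine eq_smul_of_cross_eq_zero (h.cross_ne_zero hy) ?_
  rw [cross_cross_eq_smul_sub_smul', dotProduct_comm (p v), h.edgeJump_eq_sub hpos hneg hT]
  simp [sub_dotProduct, hf _ hy v, hf _ hy u, hf _ hy' v, hf _ hy' u]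

lemma edgeStress_sub_const (h : ConvexFan V p T) (f : Finset J → Fin 3 → ℝ) (e : Fin 3 → ℝ)
    (v u : J) : edgeStress V p T (fun t => f t - e) v u = edgeStress V p T f v u := by
  rcases h.edge_cases v u with hno | ⟨x, x', hpos, hneg, hT⟩
  · rw [edgeStress_eq_zero hno, edgeStress_eq_zero hno]
  · rw [edgeStress, edgeStress, h.edgeJump_eq_sub hpos hneg hT, h.edgeJump_eq_sub hpos hneg hT,
      sub_sub_sub_cancel_right]

lemma edgeStress_const (h : ConvexFan V p T) (e : Fin 3 → ℝ) (v u : J) :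
    edgeStress V p T (fun _ => e) v u = 0 := by
  rcases h.edge_cases v u with hno | ⟨x, x', hpos, hneg, hT⟩
  · rw [edgeStress_eq_zero hno]
  · rw [edgeStress, h.edgeJump_eq_sub hpos hneg hT, sub_self, zero_dotProduct, zero_div]

lemma gradient_eq (h : ConvexFan V p T) (ht : {v, u, x} ∈ T) {f l : Fin 3 → ℝ} (hfv : f ⬝ᵥ p v = 0)
    (hlv : l ⬝ᵥ p v = 0) (hlu : l ⬝ᵥ p u ≠ 0) :
    f = (f ⬝ᵥ p u / l ⬝ᵥ p u) • l +
      ((f ⬝ᵥ p x - f ⬝ᵥ p u * l ⬝ᵥ p x / l ⬝ᵥ p u) / tripleProduct (p v) (p u) (p x)) •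
        p v ⨯₃ p u := by
  have hne := h.tripleProduct_ne_zero ht
  rw [← sub_eq_zero]
  refine eq_zero_of_dotProduct_eq_zero hne ?_ ?_ ?_ <;>
    simp only [sub_dotProduct, add_dotProduct, smul_dotProduct, smul_eq_mul, cross_dotProduct, hfv,
      hlv]
  · simp [tripleProduct]
  · simp [tripleProduct, hlu]
  · field_simp; ring

lemma edgeStress_eq_linkOperator (h : ConvexFan V p T) {f : Finset J → Fin 3 → ℝ} {g : J → ℝ}
    (hf : IsPiecewiseGradient p T f g) (hgv : g v = 0) {l : Fin 3 → ℝ} (hlv : l ⬝ᵥ p v = 0)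
    (hl : ∀ u x, {v, u, x} ∈ T → l ⬝ᵥ p u ≠ 0) (u : J) :
    edgeStress V p T f v u =
      linkOperator (V.erase v) (linkWeight p T v) (fun j => l ⬝ᵥ p j) g u := by
  rcases h.edge_cases v u with hno | ⟨x, x', hpos, hneg, hT⟩
  · rw [edgeStress_eq_zero hno, linkOperator_apply]
    exact (Finset.sum_eq_zero fun x _ => by rw [linkWeight, if_neg (hno x), zero_mul]).symm
  have hx : {v, u, x} ∈ T := (hT x).2 (Or.inl rfl)
  have hx' : {v, u, x'} ∈ T := (hT x').2 (Or.inr rfl)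
  have hxx' : x ≠ x' := by rintro rfl; exact lt_asymm hpos hneg
  have hgrad {y : J} (hy : {v, u, y} ∈ T) : f {v, u, y} = (g u / l ⬝ᵥ p u) • l +
      ((g y - g u * l ⬝ᵥ p y / l ⬝ᵥ p u) / tripleProduct (p v) (p u) (p y)) • p v ⨯₃ p u := by
    have := h.gradient_eq hy (by rw [hf _ hy v (by simp), hgv]) hlv (hl u y hy)
    rwa [hf _ hy u (by simp), hf _ hy y (by simp)] at this
  have hsub : {x, x'} ⊆ V.erase v := by
    simp [Finset.insert_subset_iff, h.mem_right hx, h.mem_right hx', (h.ne hx).2.1.symm,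
      (h.ne hx').2.1.symm]
  rw [h.edgeStress_eq hx, linkOperator_apply, ← Finset.sum_subset hsub, Finset.sum_pair hxx',
    linkWeight, linkWeight, if_pos hx, if_pos hx', abs_of_pos hpos, abs_of_neg hneg]
  · intro y _ hy
    rw [linkWeight, if_neg (by simpa [hT] using hy), zero_mul]
  · rw [h.edgeJump_eq_sub hpos hneg hT, hgrad hx, hgrad hx', add_sub_add_left_eq_sub, ← sub_smul]
    congr 1
    rw [inv_neg]
    ring

lemma edgeStress_nonneg (h : ConvexFan V p T) {n : Finset J → Fin 3 → ℝ}
    (hn : ∀ t ∈ T, (∀ j ∈ t, n t ⬝ᵥ p j = 1) ∧ ∀ j ∈ V, n t ⬝ᵥ p j ≤ 1) (v u : J) :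
    0 ≤ edgeStress V p T n v u := by
  rcases h.edge_cases v u with hno | ⟨x, x', hpos, hneg, hT⟩
  · exact (edgeStress_eq_zero hno n).ge
  have hx : {v, u, x} ∈ T := (hT x).2 (Or.inl rfl)
  have hx' : {v, u, x'} ∈ T := (hT x').2 (Or.inr rfl)
  have hjump := h.edgeJump_eq_smul_cross (g := 1) (fun t ht => (hn t ht).1) v u
  rw [h.edgeJump_eq_sub hpos hneg hT] at hjump
  have hle : edgeStress V p T n v u * tripleProduct (p v) (p u) (p x') ≤ 0 := by
    have := congrArg (· ⬝ᵥ p x') hjump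
    simp only [sub_dotProduct, smul_dotProduct, cross_dotProduct, smul_eq_mul,
      (hn _ hx').1 x' (by simp)] at this
    linarith [(hn _ hx).2 x' (h.mem_right hx')]
  exact nonneg_of_mul_nonpos_left hle hneg

end ConvexFan

end EdgeStress

/-- `A` evaluates, in the direction `a`, piecewise linear functions on the star of `v` that vanish
at `v`; they are encoded by their values at the neighbours of `v`. -/
def IsLinkEvaluation {J : Type*} (p : J → Fin 3 → ℝ) (T : Finset (Finset J)) (v : J)
    (a : Fin 3 → ℝ) (A : (J → ℝ) →ₗ[ℝ] ℝ) : Prop :=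
  ∃ u x, {v, u, x} ∈ T ∧ ∃ γ α β : ℝ, 0 ≤ α ∧ 0 ≤ β ∧ a = γ • p v + α • p u + β • p x ∧
    A = α • LinearMap.proj u + β • LinearMap.proj x

section LinkEvaluation

variable {J : Type*} {V : Finset J} {p : J → Fin 3 → ℝ} {T : Finset (Finset J)} {v u x : J}
  {a : Fin 3 → ℝ} {A B : (J → ℝ) →ₗ[ℝ] ℝ}

lemma IsLinkEvaluation.apply_dotProduct (hA : IsLinkEvaluation p T v a A) {m : Fin 3 → ℝ}
    (hm : m ⬝ᵥ p v = 0) : A (fun j => m ⬝ᵥ p j) = m ⬝ᵥ a := by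
  obtain ⟨u, x, -, γ, α, β, -, -, rfl, rfl⟩ := hA
  simp [dotProduct_add, dotProduct_smul, hm]

namespace ConvexFan

lemma mem_of_mem_coneOf (h : ConvexFan V p T) (hv : v ∈ V) {t : Finset J} (ht : t ∈ T)
    (hmem : p v ∈ coneOf p t) : v ∈ t := by
  obtain ⟨α, hα, hsum⟩ := hmem
  obtain ⟨n, hn, hn_le⟩ := h.exists_normal t ht
  obtain ⟨e, hev, he⟩ := h.exposed v hv
  have hsum_le : ∑ j ∈ t, α j ≤ 1 := by
    calc ∑ j ∈ t, α j = n ⬝ᵥ p v := by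
          rw [← hsum, dotProduct_sum]
          exact Finset.sum_congr rfl fun j hj => by
            rw [dotProduct_smul, hn j hj, smul_eq_mul, mul_one]
      _ ≤ 1 := hn_le v hv
  have hsum_mul : ∑ j ∈ t, α j * e ⬝ᵥ p j = 1 := by
    rw [← hev, ← hsum, dotProduct_sum]
    simp [dotProduct_smul]
  by_contra hvt
  have hlt (j : J) (hj : j ∈ t) : e ⬝ᵥ p j < 1 :=
    he j (h.subset t ht hj) fun hjv => hvt (hjv ▸ hj)
  have hzero : ∑ j ∈ t, α j * (1 - e ⬝ᵥ p j) ≤ 0 := by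
    simp only [mul_sub, mul_one, Finset.sum_sub_distrib, hsum_mul]
    linarith
  have hterm (j : J) (hj : j ∈ t) : 0 ≤ α j * (1 - e ⬝ᵥ p j) :=
    mul_nonneg (hα j hj) (sub_nonneg.2 (hlt j hj).le)
  have hα_zero (j : J) (hj : j ∈ t) : α j = 0 := by
    have := (Finset.sum_eq_zero_iff_of_nonneg hterm).1 (hzero.antisymm (Finset.sum_nonneg hterm))
    exact (mul_eq_zero.1 (this j hj)).resolve_right (sub_pos.2 (hlt j hj)).ne'
  rw [Finset.sum_congr rfl fun j hj => by rw [hα_zero j hj, zero_mul]] at hsum_mul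
  simp at hsum_mul

lemma exists_isLinkEvaluation (h : ConvexFan V p T) (hv : v ∈ V) (a : Fin 3 → ℝ) :
    ∃ A, IsLinkEvaluation p T v a A := by
  obtain ⟨t, ht, hvt, ε, hε, hmem⟩ := h.exists_mem_coneOf_and_add_smul_mem (p v) a
  obtain ⟨u, x, rfl⟩ := exists_eq_triple_of_mem (h.card_eq t ht) (h.mem_of_mem_coneOf hv ht hvt)
  obtain ⟨γ, α, β, -, hα, hβ, he⟩ := (h.mem_coneOf_triple ht).1 hmem
  refine ⟨_, u, x, ht, (γ - 1) / ε, α / ε, β / ε, by positivity, by positivity, ?_, rfl⟩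
  rw [← smul_right_inj hε.ne']
  simp only [smul_add, smul_smul, mul_div_cancel₀ _ hε.ne']
  linear_combination (norm := module) -he

lemma apply_linkEvaluation_pos (h : ConvexFan V p T) (hA : IsLinkEvaluation p T v a A)
    (ha : a ≠ 0) (hav : a ⬝ᵥ p v = 0) {q : J → ℝ} (hq : ∀ j ∈ V.erase v, 0 < q j) : 0 < A q := by
  obtain ⟨u, x, ht, γ, α, β, hα, hβ, he, rfl⟩ := hA
  have hqu : 0 < q u := hq u (by simp [(h.ne ht).1.symm, h.mem_middle ht])
  have hqx : 0 < q x := hq x (by simp [(h.ne ht).2.1.symm, h.mem_right ht])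
  have hαβ : 0 < α ∨ 0 < β := by
    by_contra! hcon
    rw [hcon.1.antisymm hα, hcon.2.antisymm hβ, zero_smul, zero_smul, add_zero, add_zero] at he
    exact ha (dotProduct_self_eq_zero.1 (by nth_rewrite 2 [he]; simp [hav]))
  simp only [LinearMap.add_apply, LinearMap.smul_apply, LinearMap.proj_apply, smul_eq_mul]
  rcases hαβ with hα | hβ <;> positivity

lemma linkEvaluation_eq (h : ConvexFan V p T) (hA : IsLinkEvaluation p T v a A)
    (ht : {v, u, x} ∈ T) {κ ρ α β : ℝ} (hκ : 0 ≤ κ) (hα : 0 ≤ α) (hβ : 0 ≤ β)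
    (he : ρ • p v + κ • a = α • p u + β • p x) (g : J → ℝ) :
    κ * A g = α * g u + β * g x := by
  obtain ⟨u', x', ht', γ', α', β', hα', hβ', rfl, rfl⟩ := hA
  have := h.link_sum_eq ht' ht (γ := ρ + κ * γ') (γ' := 0) (mul_nonneg hκ hα') (mul_nonneg hκ hβ')
    hα hβ (by linear_combination (norm := module) he) g
  rw [← this]
  simp only [LinearMap.add_apply, LinearMap.smul_apply, LinearMap.proj_apply, smul_eq_mul]
  ring

/-- The ray where the edge `ux` of the link crosses the plane `l = 0` is spanned, modulo `p v`, by
`l ⨯₃ p v` or by its negative. -/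
lemma mul_eq_mul_of_linkEvaluation_eq_zero (h : ConvexFan V p T) {l : Fin 3 → ℝ}
    (hlv : l ⬝ᵥ p v = 0) (hne : l ⨯₃ p v ≠ 0) (hA : IsLinkEvaluation p T v (l ⨯₃ p v) A)
    (hB : IsLinkEvaluation p T v (-(l ⨯₃ p v)) B) {g : J → ℝ} (hAg : A g = 0) (hBg : B g = 0)
    (ht : {v, u, x} ∈ T) (hcross : l ⬝ᵥ p u * l ⬝ᵥ p x < 0) :
    g u * l ⬝ᵥ p x = g x * l ⬝ᵥ p u := by
  have hz : l ⬝ᵥ (|l ⬝ᵥ p x| • p u + |l ⬝ᵥ p u| • p x) = 0 := by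
    rw [dotProduct_add, dotProduct_smul, dotProduct_smul, smul_eq_mul, smul_eq_mul]
    rcases mul_neg_iff.1 hcross with ⟨hu, hx⟩ | ⟨hu, hx⟩
    · rw [abs_of_pos hu, abs_of_neg hx]; ring
    · rw [abs_of_neg hu, abs_of_pos hx]; ring
  obtain ⟨ρ, κ, he⟩ := eq_smul_add_smul_cross hne hlv hz
  have hzero : |l ⬝ᵥ p x| * g u + |l ⬝ᵥ p u| * g x = 0 := by
    rcases le_total 0 κ with hκ | hκ
    · rw [← h.linkEvaluation_eq hA ht hκ (abs_nonneg _) (abs_nonneg _) he.symm, hAg, mul_zero]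
    · rw [← h.linkEvaluation_eq hB ht (neg_nonneg.2 hκ) (abs_nonneg _) (abs_nonneg _)
        (by rw [he, neg_smul_neg]), hBg, mul_zero]
  rcases mul_neg_iff.1 hcross with ⟨hu, hx⟩ | ⟨hu, hx⟩
  · rw [abs_of_pos hu, abs_of_neg hx] at hzero; linarith
  · rw [abs_of_neg hu, abs_of_pos hx] at hzero; linarith

lemma exists_orthogonal_forall_dotProduct_ne_zero (h : ConvexFan V p T) (hv : v ∈ V) :
    ∃ l : Fin 3 → ℝ, l ⬝ᵥ p v = 0 ∧ l ⨯₃ p v ≠ 0 ∧ ∀ u x, {v, u, x} ∈ T → l ⬝ᵥ p u ≠ 0 := by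
  obtain ⟨m, hm⟩ := Module.exists_dual_forall_apply_ne_zero (K := ℝ)
    (fun i : {u : V // ∃ x, {v, u.1, x} ∈ T} => p v ⨯₃ p i)
    (fun i => i.2.elim fun x ht => h.cross_ne_zero ht)
  obtain ⟨m, rfl⟩ := (dotProductEquiv ℝ (Fin 3)).surjective m
  have hl (u x : J) (ht : {v, u, x} ∈ T) : m ⨯₃ p v ⬝ᵥ p u ≠ 0 := by
    rw [cross_dotProduct]
    exact hm ⟨⟨u, h.mem_middle ht⟩, x, ht⟩
  refine ⟨m ⨯₃ p v, by simp [cross_dotProduct, tripleProduct], fun hzero => ?_, hl⟩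
  obtain ⟨-, u, x, ht, -⟩ := h.exists_isLinkEvaluation hv 0
  have hpv : p v ≠ 0 := fun h0 => h.cross_ne_zero ht (by simp [h0])
  obtain ⟨r, hr⟩ := eq_smul_of_cross_eq_zero hpv hzero
  have hr0 : r = 0 := by
    have : r * p v ⬝ᵥ p v = 0 := by
      rw [← smul_eq_mul, ← smul_dotProduct, ← hr]
      simp [cross_dotProduct, tripleProduct]
    simpa [hpv] using this
  exact hl u x ht (by rw [hr, hr0, zero_smul, zero_dotProduct])

/-- Minkowski's inequality for the link of `v`, in the style of the Alexandrov–Fenchel inequality: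
the quadratic form `∑ Λg · g` is negative on the orthogonal complement of the positive function
`1 - e`. -/
lemma sum_edgeStress_mul_nonpos_of_orthogonal (h : ConvexFan V p T) (hv : v ∈ V) {e : Fin 3 → ℝ}
    (hev : e ⬝ᵥ p v = 1) (he : ∀ u ∈ V, u ≠ v → e ⬝ᵥ p u < 1) {f : Finset J → Fin 3 → ℝ}
    {X : J → ℝ} (hf : IsPiecewiseGradient p T f X) (hXv : X v = 0)
    (horth : ∑ u ∈ V.erase v, edgeStress V p T f v u * (1 - e ⬝ᵥ p u) = 0) :
    ∑ u ∈ V.erase v, edgeStress V p T f v u * X u ≤ 0 ∧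
      (∑ u ∈ V.erase v, edgeStress V p T f v u * X u = 0 →
        ∀ u ∈ V.erase v, edgeStress V p T f v u = 0) := by
  obtain ⟨l, hlv, hne, hl⟩ := h.exists_orthogonal_forall_dotProduct_ne_zero hv
  obtain ⟨A, hA⟩ := h.exists_isLinkEvaluation hv (l ⨯₃ p v)
  obtain ⟨B, hB⟩ := h.exists_isLinkEvaluation hv (-(l ⨯₃ p v))
  choose! n hn using h.exists_normal
  have hav : l ⨯₃ p v ⬝ᵥ p v = 0 := by simp [cross_dotProduct, tripleProduct]
  have hΛX := h.edgeStress_eq_linkOperator hf hXv hlv hl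
  have hΛq := h.edgeStress_eq_linkOperator (f := fun t => n t - e) (g := fun j => 1 - e ⬝ᵥ p j)
    (fun t ht j hj => by rw [sub_dotProduct, (hn t ht).1 j hj]) (sub_eq_zero.2 hev.symm) hlv hl
  have hΛa := h.edgeStress_eq_linkOperator (f := fun _ => l ⨯₃ p v)
    (g := fun j => l ⨯₃ p v ⬝ᵥ p j) (fun _ _ _ _ => rfl) hav hlv hl
  simp only [h.edgeStress_sub_const, h.edgeStress_const] at hΛq hΛa
  have hq_pos (u : J) (hu : u ∈ V.erase v) : 0 < 1 - e ⬝ᵥ p u :=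
    sub_pos.2 (he u (Finset.mem_of_mem_erase hu) (Finset.ne_of_mem_erase hu))
  simp only [hΛX] at horth ⊢
  exact sum_linkOperator_mul_self_nonpos_of_orthogonal (linkWeight_comm v) (linkWeight_nonneg v)
    (fun u x hux => hl u x (mem_of_linkWeight_ne_zero hux))
    (fun g hAg hBg u x hux => h.mul_eq_mul_of_linkEvaluation_eq_zero hlv hne hA hB hAg hBg
      (mem_of_linkWeight_ne_zero hux))
    (funext fun u => (hΛa u).symm) (by simpa [hA.apply_dotProduct hav] using hne)
    (by rw [hA.apply_dotProduct hav, hB.apply_dotProduct hav, dotProduct_neg, add_neg_cancel])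
    (h.apply_linkEvaluation_pos hA hne hav hq_pos)
    (h.apply_linkEvaluation_pos hB (neg_ne_zero.2 hne) (by rw [neg_dotProduct, hav, neg_zero])
      hq_pos)
    hq_pos (fun u _ => hΛq u ▸ h.edgeStress_nonneg hn v u) horth

lemma sum_edgeStress_mul_sub_nonpos (h : ConvexFan V p T) (hv : v ∈ V) {b : Finset J → Fin 3 → ℝ}
    {s : J → ℝ} (hb : IsPiecewiseGradient p T b s)
    (heq : ∑ u ∈ V, edgeStress V p T b v u • (p u - p v) = 0) :
    ∑ u ∈ V, edgeStress V p T b v u * (s u - s v) ≤ 0 ∧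
      (∑ u ∈ V, edgeStress V p T b v u * (s u - s v) = 0 →
        ∀ u ∈ V, edgeStress V p T b v u = 0) := by
  obtain ⟨e, hev, he⟩ := h.exposed v hv
  have hvv : edgeStress V p T b v v = 0 := edgeStress_eq_zero (fun x hx => (h.ne hx).1 rfl) b
  have horth : ∑ u ∈ V.erase v, edgeStress V p T b v u * (1 - e ⬝ᵥ p u) = 0 := by
    have := congrArg (e ⬝ᵥ ·) heq
    rw [Finset.sum_erase _ (by rw [hvv, zero_mul]), ← neg_eq_zero, ← Finset.sum_neg_distrib]
    simpa [dotProduct_sum, dotProduct_smul, dotProduct_sub, hev, ← mul_neg] using this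
  have hsum : ∑ u ∈ V, edgeStress V p T b v u * (s u - s v) =
      ∑ u ∈ V.erase v, edgeStress V p T b v u * (s u - s v * e ⬝ᵥ p u) := by
    rw [← Finset.sum_erase V (a := v) (by rw [hvv, zero_mul]), ← sub_eq_zero,
      ← mul_zero (-s v), ← horth, ← Finset.sum_sub_distrib, Finset.mul_sum]
    exact Finset.sum_congr rfl fun u _ => by ring
  have key := h.sum_edgeStress_mul_nonpos_of_orthogonal hv hev he
    (f := fun t => b t - s v • e) (X := fun u => s u - s v * e ⬝ᵥ p u)
    (fun t ht j hj => by rw [sub_dotProduct, hb t ht j hj, smul_dotProduct, smul_eq_mul])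
    (by rw [hev, mul_one, sub_self]) (by simpa only [h.edgeStress_sub_const] using horth)
  simp only [h.edgeStress_sub_const] at key
  rw [hsum]
  refine ⟨key.1, fun hzero u hu => ?_⟩
  rcases eq_or_ne u v with rfl | huv
  · exact hvv
  · exact key.2 hzero u (Finset.mem_erase.2 ⟨huv, hu⟩)

end ConvexFan

end LinkEvaluation

section InfinitesimalRotation

lemma exists_ne_zero_orthogonal_pair (a b : Fin 3 → ℝ) :
    ∃ n : Fin 3 → ℝ, n ≠ 0 ∧ n ⬝ᵥ a = 0 ∧ n ⬝ᵥ b = 0 := by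
  have hker : LinearMap.ker (Matrix.mulVecLin !![a 0, a 1, a 2; b 0, b 1, b 2]) ≠ ⊥ :=
    LinearMap.ker_ne_bot_of_finrank_lt (by simp)
  obtain ⟨n, hn, hn0⟩ := Submodule.exists_mem_ne_zero_of_ne_bot hker
  have hn' := congrFun (LinearMap.mem_ker.1 hn)
  refine ⟨n, hn0, ?_, ?_⟩
  · simpa [Fin.sum_univ_three, dotProduct, mul_comm] using hn' 0
  · simpa [Fin.sum_univ_three, dotProduct, mul_comm] using hn' 1

/-- Expansion in the basis dual to `a, c, a × c`. -/
lemma normSq_cross_smul_eq (a c z : Fin 3 → ℝ) :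
    (a ⨯₃ c ⬝ᵥ a ⨯₃ c) • z = (z ⬝ᵥ a ⨯₃ c) • a ⨯₃ c + (z ⬝ᵥ a) • c ⨯₃ (a ⨯₃ c) +
      (z ⬝ᵥ c) • (a ⨯₃ c) ⨯₃ a := by
  ext i
  fin_cases i <;>
  · simp only [cross_apply, Matrix.vec3_dotProduct, Matrix.cons_val, Pi.add_apply,
      Pi.smul_apply, smul_eq_mul, Fin.zero_eta, Fin.mk_one, Fin.reduceFinMk]
    ring

lemma exists_cross_eq {a c : Fin 3 → ℝ} (hac : a ⨯₃ c ≠ 0) {y z : Fin 3 → ℝ} (hya : y ⬝ᵥ a = 0)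
    (hzc : z ⬝ᵥ c = 0) (hyz : y ⬝ᵥ c + z ⬝ᵥ a = 0) :
    ∃ ω : Fin 3 → ℝ, ω ⨯₃ a = y ∧ ω ⨯₃ c = z := by
  have hN : a ⨯₃ c ⬝ᵥ a ⨯₃ c ≠ 0 := by simpa using hac
  have hcy := normSq_cross_smul_eq a c y
  have hcz := normSq_cross_smul_eq a c z
  rw [hya, zero_smul, add_zero] at hcy
  rw [hzc, zero_smul, add_zero, eq_neg_of_add_eq_zero_right hyz] at hcz
  refine ⟨(a ⨯₃ c ⬝ᵥ a ⨯₃ c)⁻¹ • ((z ⬝ᵥ a ⨯₃ c) • a - (y ⬝ᵥ a ⨯₃ c) • c + (y ⬝ᵥ c) • a ⨯₃ c),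
    ?_, ?_⟩
  · rw [← smul_right_inj hN, hcy]
    simp only [map_smul, map_add, map_sub, LinearMap.smul_apply, LinearMap.add_apply,
      LinearMap.sub_apply, cross_self, smul_inv_smul₀ hN, ← cross_anticomm a c]
    module
  · rw [← smul_right_inj hN, hcz]
    simp only [map_smul, map_add, map_sub, LinearMap.smul_apply, LinearMap.add_apply,
      LinearMap.sub_apply, cross_self, smul_inv_smul₀ hN, ← cross_anticomm c (a ⨯₃ c)]
    module

lemma exists_eq_cross_add_of_tripleProduct_ne_zero {J : Type*} {p w : J → Fin 3 → ℝ} {v u x : J}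
    (hne : tripleProduct (p v) (p u) (p x) ≠ 0) (hvu : (w u - w v) ⬝ᵥ (p u - p v) = 0)
    (hvx : (w x - w v) ⬝ᵥ (p x - p v) = 0) (hux : (w x - w u) ⬝ᵥ (p x - p u) = 0) :
    ∃ ω b : Fin 3 → ℝ, ∀ j ∈ ({v, u, x} : Finset J), w j = ω ⨯₃ p j + b := by
  have hcross : (p u - p v) ⨯₃ (p x - p v) ≠ 0 := by
    intro hzero
    apply hne
    rw [tripleProduct, ← dotProduct_zero (p v), ← hzero]
    simp [dotProduct_sub]
  have hmixed : (w u - w v) ⬝ᵥ (p x - p v) + (w x - w v) ⬝ᵥ (p u - p v) = 0 := by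
    simp only [sub_dotProduct, dotProduct_sub] at hvu hvx hux ⊢
    linarith
  obtain ⟨ω, hu, hx⟩ := exists_cross_eq hcross hvu hvx hmixed
  refine ⟨ω, w v - ω ⨯₃ p v, fun j hj => ?_⟩
  simp only [Finset.mem_insert, Finset.mem_singleton] at hj
  rw [map_sub] at hu hx
  rcases hj with rfl | rfl | rfl
  · abel
  · linear_combination (norm := module) -hu
  · linear_combination (norm := module) -hx

end InfinitesimalRotation

lemma eq_of_isPreconnected_of_closed_cover {X ι D : Type*} [TopologicalSpace X] {S : Set X}
    (hS : IsPreconnected S) {T : Finset ι} {C : ι → Set X} (hC : ∀ i ∈ T, IsClosed (C i))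
    (hcover : S ⊆ ⋃ i ∈ T, C i) {f : ι → D}
    (hf : ∀ i ∈ T, ∀ j ∈ T, (S ∩ (C i ∩ C j)).Nonempty → f i = f j) {i j : ι} (hi : i ∈ T)
    (hj : j ∈ T) (hSi : (S ∩ C i).Nonempty) (hSj : (S ∩ C j).Nonempty) : f i = f j := by
  by_contra hne
  let region (P : D → Prop) : Set X := ⋃ k ∈ {k | k ∈ T ∧ P (f k)}, C k
  have hclosed (P : D → Prop) : IsClosed (region P) :=
    (T.finite_toSet.subset fun _ hk => hk.1).isClosed_biUnion fun k hk => hC k hk.1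
  have hmem (P : D → Prop) {k : ι} (hk : k ∈ T) (hP : P (f k)) : C k ⊆ region P :=
    fun _ hy => Set.mem_iUnion₂.2 ⟨k, ⟨hk, hP⟩, hy⟩
  have hregions : S ⊆ region (· = f i) ∪ region (· ≠ f i) := fun y hy => by
    obtain ⟨k, hk, hyk⟩ := Set.mem_iUnion₂.1 (hcover hy)
    by_cases hfk : f k = f i
    · exact .inl (hmem (· = f i) hk hfk hyk)
    · exact .inr (hmem (· ≠ f i) hk hfk hyk)
  obtain ⟨y, hyS, hy, hy'⟩ := isPreconnected_closed_iff.1 hS _ _ (hclosed (· = f i))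
    (hclosed (· ≠ f i)) hregions (hSi.mono (Set.inter_subset_inter_right S (hmem (· = f i) hi rfl)))
    (hSj.mono (Set.inter_subset_inter_right S (hmem (· ≠ f i) hj (Ne.symm hne))))
  obtain ⟨k, hk, hyk⟩ := Set.mem_iUnion₂.1 hy
  obtain ⟨k', hk', hyk'⟩ := Set.mem_iUnion₂.1 hy'
  exact hk'.2 ((hf k' hk'.1 k hk.1 ⟨y, hyS, hyk', hyk⟩).trans hk.2)

lemma isPiecewiseGradient_of_rotation {J : Type*} {p w : J → Fin 3 → ℝ} {T : Finset (Finset J)}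
    {ω b : Finset J → Fin 3 → ℝ} (hw : ∀ t ∈ T, ∀ j ∈ t, w j = ω t ⨯₃ p j + b t) :
    IsPiecewiseGradient p T b fun j => w j ⬝ᵥ p j := fun t ht j hj => by
  simp only [hw t ht j hj, add_dotProduct, cross_dotProduct, tripleProduct, cross_self,
    dotProduct_zero, zero_add]

namespace ConvexFan

variable {J : Type*} {V : Finset J} {p : J → Fin 3 → ℝ} {T : Finset (Finset J)}

section Connected

lemma exists_triple_mem (h : ConvexFan V p T) {v : J} (hv : v ∈ V) : ∃ u x, {v, u, x} ∈ T := by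
  obtain ⟨t, ht, hmem⟩ := h.exists_mem (p v)
  obtain ⟨u, x, rfl⟩ := exists_eq_triple_of_mem (h.card_eq t ht) (h.mem_of_mem_coneOf hv ht hmem)
  exact ⟨u, x, ht⟩

lemma sum_notMem_coneOf_singleton (h : ConvexFan V p T) {t : Finset J} (ht : t ∈ T) {v : J}
    (hv : v ∈ V) : ∑ j ∈ t, p j ∉ coneOf p {v} := by
  rintro ⟨κ, hκ, he⟩
  rw [Finset.sum_singleton] at he
  obtain ⟨u, x, hvux⟩ := h.exists_triple_mem hv
  obtain ⟨j, hj, hjv⟩ := Finset.exists_mem_ne (by rw [h.card_eq t ht]; norm_num) v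
  have := h.sum_smul_eq ht hvux (α := 1) (β := Pi.single v (κ v)) (fun _ _ => zero_le_one)
    (fun i _ => by rw [Pi.single_apply]; split_ifs <;> simp [hκ])
    (by simp [← he, Pi.single_apply]) (Pi.single j (1 : ℝ))
  simp [Pi.single_apply, hj, hjv] at this

lemma exists_edge_of_mem_inter (h : ConvexFan V p T) {t t' : Finset J} (ht : t ∈ T) (ht' : t' ∈ T)
    {y : Fin 3 → ℝ} (hy : y ∈ coneOf p t) (hy' : y ∈ coneOf p t')
    (hray : ∀ v ∈ V, y ∉ coneOf p {v}) : ∃ v u x x', t = {v, u, x} ∧ t' = {v, u, x'} := by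
  obtain ⟨α, hα, he⟩ := h.inter_subset t ht t' ht' ⟨hy, hy'⟩
  have hcard : 1 < (t ∩ t').card := by
    by_contra! hle
    rcases (t ∩ t').eq_empty_or_nonempty with hempty | hne
    · obtain ⟨v, hv⟩ : t.Nonempty := by rw [← Finset.card_pos, h.card_eq t ht]; norm_num
      exact hray v (h.subset t ht hv) ⟨0, fun _ _ => le_rfl, by simp [← he, hempty]⟩
    · obtain ⟨v, hv⟩ := Finset.card_eq_one.1 (hle.antisymm hne.card_pos)
      have hvt : v ∈ t := Finset.mem_of_mem_inter_left (hv ▸ Finset.mem_singleton_self v)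
      exact hray v (h.subset t ht hvt) ⟨α, hv ▸ hα, hv ▸ he⟩
  obtain ⟨v, hv, u, hu, hvu⟩ := Finset.one_lt_card.1 hcard
  rw [Finset.mem_inter] at hv hu
  obtain ⟨x, rfl⟩ := exists_eq_triple_of_mem_of_mem (h.card_eq t ht) hv.1 hu.1 hvu
  obtain ⟨x', rfl⟩ := exists_eq_triple_of_mem_of_mem (h.card_eq t' ht') hv.2 hu.2 hvu
  exact ⟨v, u, x, x', rfl, rfl⟩

lemma eq_of_isPreconnected (h : ConvexFan V p T) {D : Type*} {f : Finset J → D}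
    (hf : ∀ v u x x', {v, u, x} ∈ T → {v, u, x'} ∈ T → f {v, u, x} = f {v, u, x'})
    {S : Set (Fin 3 → ℝ)} (hS : IsPreconnected S) (hray : ∀ y ∈ S, ∀ v ∈ V, y ∉ coneOf p {v})
    {t t' : Finset J} (ht : t ∈ T) (ht' : t' ∈ T) {a a' : Fin 3 → ℝ} (ha : a ∈ S)
    (hat : a ∈ coneOf p t) (ha' : a' ∈ S) (hat' : a' ∈ coneOf p t') : f t = f t' := by
  refine eq_of_isPreconnected_of_closed_cover hS
    (fun s hs => isClosed_coneOf (h.linearIndepOn s hs))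
    (fun y _ => by simpa only [Set.mem_iUnion₂, exists_prop] using h.exists_mem y) ?_ ht ht'
    ⟨a, ha, hat⟩ ⟨a', ha', hat'⟩
  rintro s hs s' hs' ⟨y, hyS, hys, hys'⟩
  obtain ⟨v, u, x, x', rfl, rfl⟩ := h.exists_edge_of_mem_inter hs hs' hys hys' (hray y hyS)
  exact hf _ _ _ _ hs hs'

/-- Two interior points of maximal cones are joined by a broken line through some `z` that misses
all rays, where `z` lies outside the planes spanned by a ray and one of the two points. -/
lemma eq_of_mem (h : ConvexFan V p T) {D : Type*} {f : Finset J → D}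
    (hf : ∀ v u x x', {v, u, x} ∈ T → {v, u, x'} ∈ T → f {v, u, x} = f {v, u, x'})
    {t t' : Finset J} (ht : t ∈ T) (ht' : t' ∈ T) : f t = f t' := by
  choose n hn0 hny hnp using fun y v : Fin 3 → ℝ => exists_ne_zero_orthogonal_pair y v
  obtain ⟨z, hz⟩ := Module.exists_dual_forall_apply_ne_zero (K := ℝ)
    (fun i : T × V => n (∑ j ∈ i.1.1, p j) (p i.2)) fun i => hn0 _ _
  obtain ⟨z, rfl⟩ := (dotProductEquiv ℝ (Fin 3)).surjective z
  simp only [dotProductEquiv_apply_apply] at hz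
  have hray (s : Finset J) (hs : s ∈ T) (y : Fin 3 → ℝ) (hy : y ∈ segment ℝ (∑ j ∈ s, p j) z)
      (v : J) (hv : v ∈ V) : y ∉ coneOf p {v} := by
    obtain ⟨a, b, -, -, hab, rfl⟩ := hy
    intro hmem
    obtain ⟨κ, -, he⟩ := id hmem
    have hb : b = 0 := by
      have := congrArg (n (∑ j ∈ s, p j) (p v) ⬝ᵥ ·) he
      simpa [dotProduct_add, dotProduct_smul, hnp, hny, dotProduct_comm _ z,
        hz (⟨s, hs⟩, ⟨v, hv⟩)] using this
    have ha : a = 1 := by linarith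
    rw [ha, hb, one_smul, zero_smul, add_zero] at hmem
    exact h.sum_notMem_coneOf_singleton hs hv hmem
  obtain ⟨r, hr, hzr⟩ := h.exists_mem z
  have hto (s : Finset J) (hs : s ∈ T) : f s = f r :=
    h.eq_of_isPreconnected hf (convex_segment _ _).isPreconnected (hray s hs) hs hr
      (left_mem_segment ..) ⟨1, fun _ _ => zero_le_one, by simp⟩ (right_mem_segment ..) hzr
  rw [hto t ht, hto t' ht']

end Connected

section Rigidity

variable {w : J → Fin 3 → ℝ} {ω b : Finset J → Fin 3 → ℝ}

lemma edgeJump_rotation_eq_smul (h : ConvexFan V p T)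
    (hw : ∀ t ∈ T, ∀ j ∈ t, w j = ω t ⨯₃ p j + b t) (v u : J) :
    edgeJump V p T ω v u = edgeStress V p T b v u • (p u - p v) := by
  rcases h.edge_cases v u with hno | ⟨x, x', hpos, hneg, hT⟩
  · rw [edgeJump_eq_zero hno, edgeStress_eq_zero hno, zero_smul]
  have ht : {v, u, x} ∈ T := (hT x).2 (.inl rfl)
  have ht' : {v, u, x'} ∈ T := (hT x').2 (.inr rfl)
  have hJω := h.edgeJump_eq_sub hpos hneg hT ω
  have hJb := h.edgeJump_eq_sub hpos hneg hT b
  have hjump (j : J) (hj : j = v ∨ j = u) :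
      edgeJump V p T ω v u ⨯₃ p j + edgeJump V p T b v u = 0 := by
    have hwj := hw _ ht j (by rcases hj with rfl | rfl <;> simp)
    have hwj' := hw _ ht' j (by rcases hj with rfl | rfl <;> simp)
    rw [hJω, hJb, map_sub, LinearMap.sub_apply]
    linear_combination (norm := module) hwj' - hwj
  have hcross : edgeJump V p T ω v u ⨯₃ (p u - p v) = 0 := by
    rw [map_sub]
    linear_combination (norm := module) hjump u (.inr rfl) - hjump v (.inl rfl)
  have hne : p u - p v ≠ 0 := fun h0 =>
    h.cross_ne_zero ht (by rw [sub_eq_zero.1 h0, cross_self])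
  obtain ⟨r, hr⟩ := eq_smul_of_cross_eq_zero hne hcross
  rw [h.edgeStress_eq ht (r := r), hr]
  rw [eq_neg_of_add_eq_zero_right (hjump v (.inl rfl)), hr, map_smul, LinearMap.smul_apply,
    map_sub, LinearMap.sub_apply, cross_self, ← cross_anticomm (p v) (p u)]
  module

/-- Each local sum is nonpositive, and all of them together cancel by antisymmetry. -/
lemma edgeStress_translation_eq_zero (h : ConvexFan V p T)
    (hw : ∀ t ∈ T, ∀ j ∈ t, w j = ω t ⨯₃ p j + b t) {v u : J} (hv : v ∈ V) (hu : u ∈ V) :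
    edgeStress V p T b v u = 0 := by
  have hequilibrium (v : J) : ∑ u ∈ V, edgeStress V p T b v u • (p u - p v) = 0 := by
    simp only [← h.edgeJump_rotation_eq_smul hw, sum_edgeJump]
  have htotal : ∑ v ∈ V, ∑ u ∈ V, edgeStress V p T b v u * (w u ⬝ᵥ p u - w v ⬝ᵥ p v) = 0 := by
    simp only [mul_sub, Finset.sum_sub_distrib]
    rw [sub_eq_zero, Finset.sum_comm]
    simp only [edgeStress_comm b]
  have hlocal (v : J) (hv : v ∈ V) := h.sum_edgeStress_mul_sub_nonpos hv
    (isPiecewiseGradient_of_rotation hw) (hequilibrium v)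
  have hvanish := (Finset.sum_eq_zero_iff_of_nonpos fun v hv => (hlocal v hv).1).1 htotal
  exact (hlocal v hv).2 (hvanish v hv) u hu

lemma eq_of_common_edge (h : ConvexFan V p T) (hw : ∀ t ∈ T, ∀ j ∈ t, w j = ω t ⨯₃ p j + b t)
    {v u x x' : J} (ht : {v, u, x} ∈ T) (ht' : {v, u, x'} ∈ T) :
    (ω {v, u, x}, b {v, u, x}) = (ω {v, u, x'}, b {v, u, x'}) := by
  rcases h.edge_cases v u with hno | ⟨y, y', hpos, hneg, hT⟩
  · exact absurd ht (hno x)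
  have hstress := h.edgeStress_translation_eq_zero hw (h.mem_left ht) (h.mem_middle ht)
  have hω : ω {v, u, y} = ω {v, u, y'} := by
    rw [← sub_eq_zero, ← h.edgeJump_eq_sub hpos hneg hT, h.edgeJump_rotation_eq_smul hw, hstress,
      zero_smul]
  have hb : b {v, u, y} = b {v, u, y'} := by
    rw [← sub_eq_zero, ← h.edgeJump_eq_sub hpos hneg hT,
      h.edgeJump_eq_smul_cross (isPiecewiseGradient_of_rotation hw), hstress, zero_smul]
  rcases (hT x).1 ht with rfl | rfl <;> rcases (hT x').1 ht' with rfl | rfl <;> simp [hω, hb]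

theorem infinitesimally_rigid (h : ConvexFan V p T)
    (hw : ∀ t ∈ T, ∀ u ∈ t, ∀ v ∈ t, (w u - w v) ⬝ᵥ (p u - p v) = 0) {u v : J} (hu : u ∈ V)
    (hv : v ∈ V) : (w u - w v) ⬝ᵥ (p u - p v) = 0 := by
  have hrot (t : Finset J) : ∃ ω b : Fin 3 → ℝ, t ∈ T → ∀ j ∈ t, w j = ω ⨯₃ p j + b := by
    by_cases ht : t ∈ T
    · obtain ⟨x, y, z, -, -, -, rfl⟩ := Finset.card_eq_three.1 (h.card_eq t ht)
      obtain ⟨ω, b, hωb⟩ := exists_eq_cross_add_of_tripleProduct_ne_zero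
        (h.tripleProduct_ne_zero ht) (hw _ ht y (by simp) x (by simp))
        (hw _ ht z (by simp) x (by simp)) (hw _ ht z (by simp) y (by simp))
      exact ⟨ω, b, fun _ => hωb⟩
    · exact ⟨0, 0, fun ht' => absurd ht' ht⟩
  choose ω b hωb using hrot
  obtain ⟨y, x, ht⟩ := h.exists_triple_mem hu
  obtain ⟨y', x', ht'⟩ := h.exists_triple_mem hv
  have heq := h.eq_of_mem (f := fun t => (ω t, b t))
    (fun _ _ _ _ hs hs' => h.eq_of_common_edge hωb hs hs') ht ht'
  simp only [Prod.mk.injEq] at heq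
  rw [hωb _ ht u (by simp), hωb _ ht' v (by simp), heq.1, heq.2, add_sub_add_right_eq_sub,
    ← map_sub, cross_dotProduct, tripleProduct, cross_self, dotProduct_zero]

end Rigidity

end ConvexFan

section FiniteHull

variable {J E : Type*} [AddCommGroup E] [Module ℝ E] {p : J → E} {V : Finset J}

lemma mem_convexHull_image_iff_exists_sum {x : E} :
    x ∈ convexHull ℝ (p '' V) ↔
      ∃ α : J → ℝ, (∀ j ∈ V, 0 ≤ α j) ∧ ∑ j ∈ V, α j = 1 ∧ ∑ j ∈ V, α j • p j = x := by
  constructor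
  · suffices convexHull ℝ (p '' V) ⊆ {x | ∃ α : J → ℝ, (∀ j ∈ V, 0 ≤ α j) ∧ ∑ j ∈ V, α j = 1 ∧
      ∑ j ∈ V, α j • p j = x} from fun hx => this hx
    refine convexHull_min ?_ ?_
    · rintro _ ⟨i, hi, rfl⟩
      refine ⟨Pi.single i 1, fun j _ => ?_, ?_, ?_⟩
      · rw [Pi.single_apply]; split_ifs <;> norm_num
      · simpa [Pi.single_apply] using hi
      · simpa [Pi.single_apply, ite_smul] using fun h => absurd (Finset.mem_coe.1 hi) h
    · rintro x ⟨α, hα, hα1, rfl⟩ y ⟨β, hβ, hβ1, rfl⟩ a b ha hb hab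
      refine ⟨a • α + b • β, fun j hj =>
        add_nonneg (mul_nonneg ha (hα j hj)) (mul_nonneg hb (hβ j hj)), ?_, ?_⟩
      · simp [Finset.sum_add_distrib, ← Finset.mul_sum, hα1, hβ1, hab]
      · simp [Finset.sum_add_distrib, Finset.smul_sum, add_smul, mul_smul]
  · rintro ⟨α, hα, hα1, rfl⟩
    exact (convex_convexHull ℝ _).sum_mem hα hα1
      fun j hj => subset_convexHull ℝ _ (Set.mem_image_of_mem p hj)

lemma exists_smul_mem_convexHull_of_mem_coneOf {y : E} (hy : y ∈ coneOf p V) (h0 : y ≠ 0) :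
    ∃ r > (0 : ℝ), r • y ∈ convexHull ℝ (p '' V) := by
  obtain ⟨α, hα, rfl⟩ := hy
  have hpos : 0 < ∑ j ∈ V, α j := by
    refine (Finset.sum_nonneg hα).lt_of_ne fun hsum => h0 ?_
    exact Finset.sum_eq_zero fun j hj => by
      rw [(Finset.sum_eq_zero_iff_of_nonneg hα).1 hsum.symm j hj, zero_smul]
  refine ⟨(∑ j ∈ V, α j)⁻¹, inv_pos.2 hpos, ?_⟩
  exact V.centerMass_mem_convexHull hα hpos fun j hj => Set.mem_image_of_mem p hj

lemma zero_mem_convexHull_of_forall_mem_coneOf [Nontrivial E] (h : ∀ y, y ∈ coneOf p V) :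
    (0 : E) ∈ convexHull ℝ (p '' V) := by
  obtain ⟨y, hy⟩ := exists_ne (0 : E)
  obtain ⟨r, hr, hry⟩ := exists_smul_mem_convexHull_of_mem_coneOf (h y) hy
  obtain ⟨s, hs, hsy⟩ := exists_smul_mem_convexHull_of_mem_coneOf (h (-y)) (neg_ne_zero.2 hy)
  have hrs : 0 < r + s := add_pos hr hs
  convert convex_convexHull ℝ (p '' V) hry hsy (div_pos hs hrs).le (div_pos hr hrs).le
    (by field_simp; ring)
  module

lemma eq_zero_of_forall_apply_nonpos (h : ∀ y, y ∈ coneOf p V) {f : E →ₗ[ℝ] ℝ}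
    (hf : ∀ j ∈ V, f (p j) ≤ 0) : f = 0 := by
  have hle (y : E) : f y ≤ 0 := by
    obtain ⟨α, hα, rfl⟩ := h y
    simp only [map_sum, map_smul, smul_eq_mul]
    exact Finset.sum_nonpos fun j hj => mul_nonpos_of_nonneg_of_nonpos (hα j hj) (hf j hj)
  ext y
  have hneg := hle (-y)
  rw [map_neg] at hneg
  exact le_antisymm (hle y) (by simpa using hneg)

lemma apply_le_of_mem_convexHull {f : E →ₗ[ℝ] ℝ} {c : ℝ} {s : Set E} (hf : ∀ x ∈ s, f x ≤ c)
    {x : E} (hx : x ∈ convexHull ℝ s) : f x ≤ c :=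
  convexHull_min hf (convex_halfSpace_le f.isLinear c) hx

lemma eq_zero_of_apply_sum_smul_eq {f : E →ₗ[ℝ] ℝ} {c : ℝ} (hf : ∀ j ∈ V, f (p j) ≤ c)
    {α : J → ℝ} (hα : ∀ j ∈ V, 0 ≤ α j) (hsum : f (∑ j ∈ V, α j • p j) = (∑ j ∈ V, α j) * c)
    {j : J} (hj : j ∈ V) (hlt : f (p j) ≠ c) : α j = 0 := by
  have hzero : ∑ j ∈ V, α j * (c - f (p j)) = 0 := by
    simp only [map_sum, map_smul, smul_eq_mul] at hsum
    simp only [mul_sub, Finset.sum_sub_distrib, ← Finset.sum_mul, hsum, sub_self]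
  have := (Finset.sum_eq_zero_iff_of_nonneg fun j hj =>
    mul_nonneg (hα j hj) (sub_nonneg.2 (hf j hj))).1 hzero j hj
  exact (mul_eq_zero.1 this).resolve_right (sub_ne_zero.2 hlt.symm)

lemma mem_coneOf_of_subset {s : Finset J} (hs : s ⊆ V) {α : J → ℝ} (hα : ∀ j ∈ s, 0 ≤ α j)
    (h0 : ∀ j ∈ V, j ∉ s → α j = 0) : ∑ j ∈ V, α j • p j ∈ coneOf p s :=
  ⟨α, hα, Finset.sum_subset hs fun j hj hjs => by rw [h0 j hj hjs, zero_smul]⟩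

lemma coneOf_mono {s : Finset J} (hs : s ⊆ V) : coneOf p s ⊆ coneOf p V := by
  rintro _ ⟨α, hα, rfl⟩
  refine ⟨fun j => if j ∈ s then α j else 0, fun j _ => ?_, (sum_smul_eq_sum_ite_smul hs α p).symm⟩
  dsimp only
  split_ifs with hj
  exacts [hα j hj, le_rfl]

/-- Tilting `k` about the span of its tight points until it meets a new one. -/
lemma exists_dual_tight_ssubset (hq : ∀ y, y ∈ coneOf p V) {k : E →ₗ[ℝ] ℝ}
    (hk : ∀ j ∈ V, k (p j) ≤ 1) (hspan : Submodule.span ℝ (p '' {j ∈ V | k (p j) = 1}) ≠ ⊤) :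
    ∃ k' : E →ₗ[ℝ] ℝ, (∀ j ∈ V, k' (p j) ≤ 1) ∧
      {j ∈ V | k (p j) = 1} ⊂ {j ∈ V | k' (p j) = 1} := by
  obtain ⟨δ, hδ0, hδ⟩ := Submodule.exists_le_ker_of_lt_top _ hspan.lt_top
  have hδk (j : J) (hj : j ∈ V) (hkj : k (p j) = 1) : δ (p j) = 0 :=
    hδ (Submodule.subset_span ⟨j, ⟨hj, hkj⟩, rfl⟩)
  obtain ⟨j₀, hj₀⟩ : ∃ j ∈ V, 0 < δ (p j) := by
    by_contra! hcon
    exact hδ0 (eq_zero_of_forall_apply_nonpos hq hcon)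
  obtain ⟨i, hi, hmin⟩ := Finset.exists_min_image {j ∈ V | 0 < δ (p j)}
    (fun j => (1 - k (p j)) / δ (p j)) ⟨j₀, Finset.mem_filter.2 hj₀⟩
  obtain ⟨hiV, hδi⟩ := Finset.mem_filter.1 hi
  set s := (1 - k (p i)) / δ (p i) with hs
  have hs0 : 0 ≤ s := div_nonneg (sub_nonneg.2 (hk i hiV)) hδi.le
  have hsi : k (p i) + s * δ (p i) = 1 := by rw [hs, div_mul_cancel₀ _ hδi.ne']; ring
  refine ⟨k + s • δ, fun j hj => ?_, (Finset.ssubset_iff_of_subset fun j hj => ?_).2 ⟨i, ?_, ?_⟩⟩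
  · change k (p j) + s * δ (p j) ≤ 1
    obtain hδj | hδj := lt_or_ge 0 (δ (p j))
    · have := (le_div_iff₀ hδj).1 (hmin j (Finset.mem_filter.2 ⟨hj, hδj⟩))
      linarith
    · linarith [hk j hj, mul_nonpos_of_nonneg_of_nonpos hs0 hδj]
  · obtain ⟨hjV, hkj⟩ := Finset.mem_filter.1 hj
    simp [hjV, hkj, hδk j hjV hkj]
  · simpa [hiV] using hsi
  · simpa [hiV] using fun hki => hδi.ne' (hδk i hiV hki)

end FiniteHull

section FacetCone

variable {J E : Type*} [NormedAddCommGroup E] [NormedSpace ℝ E] {q : J → E} {V : Finset J}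

lemma exists_isGreatest_smul_mem_convexHull (hq : ∀ y, y ∈ coneOf q V) {y : E} (hy : y ≠ 0) :
    ∃ r > 0, IsGreatest {r : ℝ | r • y ∈ convexHull ℝ (q '' V)} r := by
  obtain ⟨r₀, hr₀, hmem⟩ := exists_smul_mem_convexHull_of_mem_coneOf (hq y) hy
  have hcompact : IsCompact {r : ℝ | r • y ∈ convexHull ℝ (q '' V)} :=
    (isClosedEmbedding_smul_left (𝕜 := ℝ) hy).isCompact_preimage <|
      (V.finite_toSet.image q).isCompact_convexHull (𝕜 := ℝ)
  obtain ⟨r, hr⟩ := hcompact.exists_isGreatest ⟨r₀, hmem⟩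
  exact ⟨r, hr₀.trans_le (hr.2 hmem), hr⟩

variable [FiniteDimensional ℝ E]

lemma interior_convexHull_nonempty_of_forall_mem_coneOf [Nontrivial E]
    (hq : ∀ y, y ∈ coneOf q V) : (interior (convexHull ℝ (q '' V))).Nonempty := by
  rw [interior_convexHull_nonempty_iff_affineSpan_eq_top,
    ← affineSpan_insert_eq_affineSpan ℝ
      (convexHull_subset_affineSpan _ (zero_mem_convexHull_of_forall_mem_coneOf hq)),
    ← AffineSubspace.coe_eq_univ_iff, affineSpan_insert_zero, Set.eq_univ_iff_forall]
  intro y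
  obtain ⟨α, -, rfl⟩ := hq y
  exact Submodule.sum_mem _ fun j hj =>
    Submodule.smul_mem _ _ (Submodule.subset_span (Set.mem_image_of_mem q hj))

lemma exists_dual_apply_isGreatest_smul_eq_one (hq : ∀ y, y ∈ coneOf q V) {y : E} (hy : y ≠ 0)
    {r : ℝ} (hr : IsGreatest {r : ℝ | r • y ∈ convexHull ℝ (q '' V)} r) :
    ∃ k : E →ₗ[ℝ] ℝ, (∀ j ∈ V, k (q j) ≤ 1) ∧ k (r • y) = 1 := by
  have : Nontrivial E := ⟨y, 0, hy⟩
  have hfrontier : r • y ∉ interior (convexHull ℝ (q '' V)) := by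
    intro hint
    have hnear : ∀ᶠ s in nhds r, s • y ∈ interior (convexHull ℝ (q '' V)) :=
      (by fun_prop : Continuous fun s : ℝ => s • y).continuousAt.eventually_mem
        (isOpen_interior.mem_nhds hint)
    obtain ⟨s, hs, hrs⟩ := ((hnear.filter_mono nhdsWithin_le_nhds).and
      (self_mem_nhdsWithin (s := Set.Ioi r))).exists
    have hs' : s • y ∈ convexHull ℝ (q '' V) := interior_subset hs
    exact (hr.2 hs').not_gt hrs
  obtain ⟨f, hf0, hf⟩ := geometric_hahn_banach_of_nonempty_interior_point (convex_convexHull ℝ _)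
    hfrontier (interior_convexHull_nonempty_of_forall_mem_coneOf hq)
  have hfq (j : J) (hj : j ∈ V) : f (q j) ≤ f (r • y) :=
    hf _ (subset_convexHull ℝ _ (Set.mem_image_of_mem q hj))
  have hpos : 0 < f (r • y) := by
    refine lt_of_not_ge fun hle => hf0 ?_
    exact ContinuousLinearMap.coe_injective
      (eq_zero_of_forall_apply_nonpos hq fun j hj => (hfq j hj).trans hle)
  exact ⟨(f (r • y))⁻¹ • (f : E →ₗ[ℝ] ℝ), fun j hj => (inv_mul_le_one₀ hpos).2 (hfq j hj),
    inv_mul_cancel₀ hpos.ne'⟩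

lemma exists_dual_mem_coneOf_tight (hq : ∀ y, y ∈ coneOf q V) (y : E) :
    ∃ k : E →ₗ[ℝ] ℝ, (∀ j ∈ V, k (q j) ≤ 1) ∧ y ∈ coneOf q {j ∈ V | k (q j) = 1} := by
  obtain rfl | hy := eq_or_ne y 0
  · exact ⟨0, by simp, 0, by simp⟩
  obtain ⟨r, hr, hgreatest⟩ := exists_isGreatest_smul_mem_convexHull hq hy
  obtain ⟨k, hk, hky⟩ := exists_dual_apply_isGreatest_smul_eq_one hq hy hgreatest
  refine ⟨k, hk, ?_⟩
  obtain ⟨α, hα, hα1, hαy⟩ := mem_convexHull_image_iff_exists_sum.1 hgreatest.1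
  have hry : r • y ∈ coneOf q {j ∈ V | k (q j) = 1} := by
    rw [← hαy]
    refine mem_coneOf_of_subset (Finset.filter_subset _ V) (fun j hj => hα j (by grind))
      fun j hj hjk => ?_
    exact eq_zero_of_apply_sum_smul_eq hk hα (by rw [hαy, hky, hα1, mul_one]) hj (by grind)
  simpa [smul_smul, inv_mul_cancel₀ hr.ne'] using smul_mem_coneOf hry (inv_nonneg.2 hr.le)

lemma exists_facet_mem_coneOf (hq : ∀ y, y ∈ coneOf q V) (y : E) :
    ∃ k : E →ₗ[ℝ] ℝ, (∀ j ∈ V, k (q j) ≤ 1) ∧ y ∈ coneOf q {j ∈ V | k (q j) = 1} ∧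
      Submodule.span ℝ (q '' {j ∈ V | k (q j) = 1}) = ⊤ := by
  let supports : Set (Finset J) := {G | ∃ k : E →ₗ[ℝ] ℝ, (∀ j ∈ V, k (q j) ≤ 1) ∧
    y ∈ coneOf q G ∧ {j ∈ V | k (q j) = 1} = G}
  have hfinite : supports.Finite := (Finset.finite_toSet V.powerset).subset <| by
    rintro _ ⟨k, -, -, rfl⟩
    exact Finset.mem_coe.2 (Finset.mem_powerset.2 (Finset.filter_subset _ V))
  obtain ⟨k₀, hk₀, hy₀⟩ := exists_dual_mem_coneOf_tight hq y
  obtain ⟨-, ⟨k, hk, hy, rfl⟩, hmax⟩ := hfinite.exists_maximal ⟨_, k₀, hk₀, hy₀, rfl⟩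
  refine ⟨k, hk, hy, ?_⟩
  by_contra hspan
  obtain ⟨k', hk', hlt⟩ := exists_dual_tight_ssubset hq hk hspan
  exact hlt.not_subset (hmax ⟨k', hk', coneOf_mono hlt.subset hy, rfl⟩ hlt.subset)

lemma exists_facet_mem_coneOf_of_mem {W : Submodule ℝ E} (hqW : ∀ j ∈ V, q j ∈ W)
    (hq : ∀ y ∈ W, y ∈ coneOf q V) {y : E} (hy : y ∈ W) :
    ∃ k : E →ₗ[ℝ] ℝ, (∀ j ∈ V, k (q j) ≤ 1) ∧ y ∈ coneOf q {j ∈ V | k (q j) = 1} ∧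
      Submodule.span ℝ (q '' {j ∈ V | k (q j) = 1}) = W := by
  obtain ⟨π, hπ⟩ := LinearMap.exists_leftInverse_of_injective W.subtype W.ker_subtype
  have hπW (x : W) : π x = x := LinearMap.congr_fun hπ x
  have hπq (j : J) (hj : j ∈ V) : (π (q j) : E) = q j :=
    congr_arg Subtype.val (hπW ⟨q j, hqW j hj⟩)
  have hcone (x : W) : x ∈ coneOf (π ∘ q) V := by
    obtain ⟨α, hα, hαx⟩ := hq x x.2
    refine ⟨α, hα, ?_⟩
    simp only [Function.comp_apply, ← map_smul, ← map_sum, hαx, hπW]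
  obtain ⟨k, hk, ⟨α, hα, hαy⟩, hspan⟩ := exists_facet_mem_coneOf hcone ⟨y, hy⟩
  refine ⟨k ∘ₗ π, hk, ⟨α, hα, ?_⟩, ?_⟩
  · calc ∑ j ∈ V with k (π (q j)) = 1, α j • q j
        = ∑ j ∈ V with k (π (q j)) = 1, α j • (π (q j) : E) :=
          Finset.sum_congr rfl fun j hj => by rw [hπq j (Finset.filter_subset _ _ hj)]
      _ = y := by simpa using congr_arg Subtype.val hαy
  · have himage : q '' {j ∈ V | k (π (q j)) = 1} =
        W.subtype '' ((π ∘ q) '' {j ∈ V | k ((π ∘ q) j) = 1}) := by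
      rw [Set.image_image]
      exact Set.image_congr fun j hj => (hπq j hj.1).symm
    rw [LinearMap.coe_comp, Function.comp_def, himage, Submodule.span_image, hspan,
      Submodule.map_subtype_top]

end FacetCone

section RegularSubdivision

variable {J E : Type*}

lemma eventually_add_smul_ne_zero_and_pos_imp (a : ℝ) {b : ℝ} (hb : b ≠ 0) :
    ∀ᶠ ε in nhdsWithin (0 : ℝ) (Set.Ioi 0), a + ε * b ≠ 0 ∧ (0 < a + ε * b → 0 ≤ a) := by
  have htendsto : Filter.Tendsto (fun ε : ℝ => a + ε * b) (nhdsWithin 0 (Set.Ioi 0)) (nhds a) := by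
    have : Continuous fun ε : ℝ => a + ε * b := by fun_prop
    simpa using (this.tendsto 0).mono_left nhdsWithin_le_nhds
  obtain ha | rfl | ha := lt_trichotomy a 0
  · filter_upwards [htendsto.eventually_lt_const ha] with ε hε
    exact ⟨hε.ne, fun h => absurd h hε.not_gt⟩
  · filter_upwards [self_mem_nhdsWithin] with ε hε
    exact ⟨by simpa [hb] using (ne_of_gt hε : ε ≠ 0), fun _ => le_rfl⟩
  · filter_upwards [htendsto.eventually_const_lt ha] with ε hε
    exact ⟨hε.ne', fun _ => ha.le⟩

lemma exists_forall_eventually_dual_ne_zero {ι M : Type*} [Finite ι] [AddCommGroup M] [Module ℝ M]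
    (L : ι → Module.Dual ℝ M) (hL : ∀ i, L i ≠ 0) (x : M) :
    ∃ g : M, ∀ᶠ ε in nhdsWithin (0 : ℝ) (Set.Ioi 0), ∀ i,
      L i (x + ε • g) ≠ 0 ∧ (0 < L i (x + ε • g) → 0 ≤ L i x) := by
  obtain ⟨g, hg⟩ := Module.Dual.exists_forall_ne_zero_of_forall_exists L fun i => by
    simpa using DFunLike.ne_iff.1 (hL i)
  refine ⟨g, Filter.eventually_all.2 fun i => ?_⟩
  simpa using eventually_add_smul_ne_zero_and_pos_imp (L i x) (hg i)

variable [AddCommGroup E] [Module ℝ E]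

/-- The maximal cells of the regular subdivision of the points `p j`, `j ∈ V`, induced by the
heights `h j`: the spanning sets on which some linear functional that is nowhere above the heights
coincides with them. -/
noncomputable def regularCells (p : J → E) (h : J → ℝ) (V : Finset J) : Finset (Finset J) :=
  {t ∈ V.powerset | Submodule.span ℝ (p '' t) = ⊤ ∧ ∃ n : E →ₗ[ℝ] ℝ,
    (∀ j ∈ V, n (p j) ≤ h j) ∧ {j ∈ V | n (p j) = h j} = t}

variable {p : J → E} {h : J → ℝ} {V : Finset J} {t t' : Finset J}

lemma mem_regularCells : t ∈ regularCells p h V ↔ Submodule.span ℝ (p '' t) = ⊤ ∧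
    ∃ n : E →ₗ[ℝ] ℝ, (∀ j ∈ V, n (p j) ≤ h j) ∧ {j ∈ V | n (p j) = h j} = t := by
  rw [regularCells, Finset.mem_filter, Finset.mem_powerset, and_iff_right_iff_imp]
  rintro ⟨-, n, -, rfl⟩
  exact Finset.filter_subset _ V

lemma coneOf_inter_subset_of_mem_regularCells (ht : t ∈ regularCells p h V)
    (ht' : t' ∈ regularCells p h V) : coneOf p t ∩ coneOf p t' ⊆ coneOf p (t ∩ t') := by
  rintro _ ⟨⟨α, hα, rfl⟩, β, hβ, he⟩
  obtain ⟨-, n, hn, rfl⟩ := mem_regularCells.1 ht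
  obtain ⟨-, n', hn', rfl⟩ := mem_regularCells.1 ht'
  have happly (m : E →ₗ[ℝ] ℝ) (s : Finset J) (γ : J → ℝ) :
      m (∑ j ∈ s, γ j • p j) = ∑ j ∈ s, γ j * m (p j) := by
    simp only [map_sum, map_smul, smul_eq_mul]
  have hterm : ∀ j ∈ ({j ∈ V | n (p j) = h j} : Finset J), α j * n' (p j) ≤ α j * n (p j) :=
    fun j hj => mul_le_mul_of_nonneg_left
      ((hn' j (by grind)).trans_eq (Finset.mem_filter.1 hj).2.symm) (hα j hj)
  have hterm' : ∀ j ∈ ({j ∈ V | n' (p j) = h j} : Finset J), β j * n (p j) ≤ β j * n' (p j) :=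
    fun j hj => mul_le_mul_of_nonneg_left
      ((hn j (by grind)).trans_eq (Finset.mem_filter.1 hj).2.symm) (hβ j hj)
  have heq : ∑ j ∈ V with n (p j) = h j, α j * n' (p j) =
      ∑ j ∈ V with n (p j) = h j, α j * n (p j) := by
    refine le_antisymm (Finset.sum_le_sum hterm) ?_
    rw [← happly, ← happly, ← he, happly, happly]
    exact Finset.sum_le_sum hterm'
  refine mem_coneOf_of_subset Finset.inter_subset_left
    (fun j hj => hα j (Finset.inter_subset_left hj)) fun j hj hj' => ?_
  have hmul := (Finset.sum_eq_sum_iff_of_le hterm).1 heq j hj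
  refine by_contra fun hαj => hj' (Finset.mem_inter.2 ⟨hj, ?_⟩)
  obtain ⟨hjV, hnj⟩ := Finset.mem_filter.1 hj
  exact Finset.mem_filter.2 ⟨hjV, (mul_left_cancel₀ hαj hmul).trans hnj⟩

lemma exists_dual_apply_eq_sub {s : Finset J} (hs : Submodule.span ℝ (p '' s) = ⊤) {u : J}
    (hu : u ∉ s) : ∃ L : Module.Dual ℝ (J → ℝ), L ≠ 0 ∧
      ∀ (h : J → ℝ) (n : E →ₗ[ℝ] ℝ), (∀ j ∈ s, n (p j) = h j) → L h = h u - n (p u) := by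
  obtain ⟨c, hc⟩ : ∃ c : J → ℝ, ∑ j ∈ s, c j • p j = p u :=
    (Submodule.mem_span_image_finset_iff_exists_fun' ℝ).1 (hs ▸ Submodule.mem_top)
  refine ⟨.proj u - ∑ j ∈ s, c j • (.proj j : Module.Dual ℝ (J → ℝ)), fun h0 => ?_,
    fun h n hn => ?_⟩
  · have := LinearMap.congr_fun h0 (Pi.single u 1)
    simp [LinearMap.sum_apply, Pi.single_apply, hu] at this
  · rw [← hc, map_sum]
    simp only [LinearMap.sub_apply, LinearMap.proj_apply, LinearMap.sum_apply, LinearMap.smul_apply,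
      map_smul]
    rw [Finset.sum_congr rfl fun j hj => by rw [← hn j hj]]

lemma exists_generic_height (p : J → E) (V : Finset J) :
    ∃ h : J → ℝ, (∀ j ∈ V, 0 < h j) ∧
      ∀ s ⊆ V, Submodule.span ℝ (p '' s) = ⊤ → ∀ u ∈ V, u ∉ s → ∀ n : E →ₗ[ℝ] ℝ,
        (∀ j ∈ s, n (p j) = h j) → n (p u) ≠ h u ∧ (n (p u) < h u →
          ∀ m : E →ₗ[ℝ] ℝ, (∀ j ∈ s, m (p j) = 1) → m (p u) ≤ 1) := by
  let ι := {i : V.powerset × V // Submodule.span ℝ (p '' i.1) = ⊤ ∧ (i.2 : J) ∉ (i.1 : Finset J)}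
  choose L hL0 hL using fun i : ι => exists_dual_apply_eq_sub i.2.1 i.2.2
  obtain ⟨g, hg⟩ := exists_forall_eventually_dual_ne_zero L hL0 1
  have hpos : ∀ᶠ ε in nhdsWithin (0 : ℝ) (Set.Ioi 0), ∀ j ∈ V, 0 < (1 + ε • g) j := by
    refine (Filter.eventually_all_finset V).2 fun j _ => ?_
    have hcont : Continuous fun ε : ℝ => (1 + ε • g) j := by
      simp only [Pi.add_apply, Pi.smul_apply]
      fun_prop
    exact nhdsWithin_le_nhds ((hcont.tendsto 0).eventually_const_lt (by simp))
  obtain ⟨ε, hgε, hposε⟩ := (hg.and hpos).exists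
  refine ⟨1 + ε • g, hposε, fun s hs hspan u hu hus n hn => ?_⟩
  let i : ι := ⟨⟨⟨s, Finset.mem_powerset.2 hs⟩, ⟨u, hu⟩⟩, hspan, hus⟩
  obtain ⟨hne, himp⟩ := hgε i
  rw [hL i _ n hn] at hne himp
  refine ⟨(sub_ne_zero.1 hne).symm, fun hlt m hm => ?_⟩
  have := himp (sub_pos.2 hlt)
  rw [hL i 1 m hm] at this
  exact sub_nonneg.1 this

lemma exists_height_forall_mem_regularCells (p : J → E) (V : Finset J) :
    ∃ h : J → ℝ, (∀ j ∈ V, 0 < h j) ∧ ∀ t ∈ regularCells p h V, LinearIndepOn ℝ p t ∧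
      ∀ m : E →ₗ[ℝ] ℝ, (∀ j ∈ t, m (p j) = 1) → ∀ u ∈ V, m (p u) ≤ 1 := by
  obtain ⟨h, hpos, hgeneric⟩ := exists_generic_height p V
  refine ⟨h, hpos, fun t ht => ?_⟩
  obtain ⟨hspan, n, hn, rfl⟩ := mem_regularCells.1 ht
  set t : Finset J := {j ∈ V | n (p j) = h j}
  have htV : t ⊆ V := Finset.filter_subset _ V
  have hnt (j : J) (hj : j ∈ t) : n (p j) = h j := (Finset.mem_filter.1 hj).2
  refine ⟨?_, fun m hm u hu => ?_⟩
  · obtain ⟨b, hbt, -, hbspan, hb⟩ :=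
      exists_linearIndepOn_extension (linearIndepOn_empty ℝ p) (Set.empty_subset (t : Set J))
    lift b to Finset J using t.finite_toSet.subset hbt
    have hbtop : Submodule.span ℝ (p '' b) = ⊤ :=
      top_unique (hspan ▸ Submodule.span_le.2 hbspan)
    suffices t ⊆ b from hb.mono (by exact_mod_cast this)
    intro u hu
    by_contra hub
    exact (hgeneric b ((Finset.coe_subset.1 hbt).trans htV) hbtop u (htV hu) hub n
      fun j hj => hnt j (hbt hj)).1 (hnt u hu)
  · by_cases hut : u ∈ t
    · exact (hm u hut).le
    · have hlt : n (p u) < h u := (hn u hu).lt_of_ne fun he => hut (by grind)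
      exact (hgeneric t htV hspan u hu hut n hnt).2 hlt m hm

end RegularSubdivision

section ExistsFan

variable {J E : Type*} [NormedAddCommGroup E] [NormedSpace ℝ E] [FiniteDimensional ℝ E]
  {p : J → E} {h : J → ℝ} {V : Finset J}

lemma exists_mem_regularCells_mem_coneOf (hp : ∀ y, y ∈ coneOf p V) (hh : ∀ j ∈ V, 0 < h j)
    (y : E) : ∃ t ∈ regularCells p h V, y ∈ coneOf p t := by
  have hscaled (y : E) : y ∈ coneOf (fun j => (h j)⁻¹ • p j) V := by
    obtain ⟨α, hα, rfl⟩ := hp y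
    refine ⟨fun j => α j * h j, fun j hj => mul_nonneg (hα j hj) (hh j hj).le,
      Finset.sum_congr rfl fun j hj => ?_⟩
    rw [smul_smul, mul_inv_cancel_right₀ (hh j hj).ne']
  obtain ⟨n, hn, ⟨α, hα, rfl⟩, hspan⟩ := exists_facet_mem_coneOf hscaled y
  have hiff (j : J) (hj : j ∈ V) : n ((h j)⁻¹ • p j) = 1 ↔ n (p j) = h j := by
    rw [map_smul, smul_eq_mul, inv_mul_eq_iff_eq_mul₀ (hh j hj).ne', mul_one]
  have htight : ({j ∈ V | n ((h j)⁻¹ • p j) = 1} : Finset J) =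
      ({j ∈ V | n (p j) = h j} : Finset J) := Finset.filter_congr hiff
  refine ⟨{j ∈ V | n (p j) = h j}, mem_regularCells.2 ⟨?_, n, fun j hj => ?_, rfl⟩,
    fun j => α j * (h j)⁻¹, fun j hj => ?_, ?_⟩
  · rw [eq_top_iff, ← hspan, Submodule.span_le]
    rintro _ ⟨j, ⟨hj, hnj⟩, rfl⟩
    exact Submodule.smul_mem _ _ (Submodule.subset_span
      ⟨j, Finset.mem_coe.2 (Finset.mem_filter.2 ⟨hj, (hiff j hj).1 hnj⟩), rfl⟩)
  · simpa [inv_mul_le_one₀ (hh j hj)] using hn j hj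
  · exact mul_nonneg (hα j (htight ▸ hj)) (inv_nonneg.2 (hh j (Finset.filter_subset _ _ hj)).le)
  · simp only [htight, mul_smul]

lemma exists_exposing_normalized [Nontrivial E] (hp : ∀ y, y ∈ coneOf p V) {v : J}
    {f : E →ₗ[ℝ] ℝ} (hf : ∀ u ∈ V, u ≠ v → f (p u) < f (p v)) :
    ∃ e : E →ₗ[ℝ] ℝ, e (p v) = 1 ∧ ∀ u ∈ V, u ≠ v → e (p u) < 1 := by
  have hpos : 0 < f (p v) := by
    by_contra! hle
    have hf0 : f = 0 := eq_zero_of_forall_apply_nonpos hp fun u hu => by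
      obtain rfl | huv := eq_or_ne u v
      exacts [hle, (hf u hu huv).le.trans hle]
    have heq (u : J) (hu : u ∈ V) : u = v := by
      by_contra huv
      simpa [hf0] using hf u hu huv
    obtain ⟨g, hg⟩ := exists_ne (0 : Module.Dual ℝ E)
    obtain hgv | hgv := le_total (g (p v)) 0
    · exact hg (eq_zero_of_forall_apply_nonpos hp fun u hu => by rwa [heq u hu])
    · refine hg (neg_eq_zero.1 (eq_zero_of_forall_apply_nonpos hp fun u hu => ?_))
      simpa [heq u hu] using hgv
  refine ⟨(f (p v))⁻¹ • f, inv_mul_cancel₀ hpos.ne', fun u hu huv => ?_⟩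
  simpa [inv_mul_lt_one₀ hpos] using hf u hu huv

/-- The heights are a generic perturbation of `1`: genericity makes the regular subdivision
simplicial, and closeness to `1` makes it refine the facets of the convex hull. -/
theorem exists_convexFan {p : J → Fin 3 → ℝ} (hp : ∀ y, y ∈ coneOf p V)
    (hexposed : ∀ v ∈ V, ∃ f : (Fin 3 → ℝ) →ₗ[ℝ] ℝ, ∀ u ∈ V, u ≠ v → f (p u) < f (p v)) :
    ∃ T, ConvexFan V p T := by
  obtain ⟨h, hpos, hcells⟩ := exists_height_forall_mem_regularCells p V
  have hspan (t : Finset J) (ht : t ∈ regularCells p h V) : Submodule.span ℝ (p '' t) = ⊤ :=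
    (mem_regularCells.1 ht).1
  let basis (t : Finset J) (ht : t ∈ regularCells p h V) : Module.Basis t ℝ (Fin 3 → ℝ) :=
    .mk (hcells t ht).1 (by rw [← hspan t ht, Set.image_eq_range])
  refine ⟨regularCells p h V, ?_, fun t ht => ?_, fun t ht => (hcells t ht).1,
    fun t ht t' ht' => coneOf_inter_subset_of_mem_regularCells ht ht',
    exists_mem_regularCells_mem_coneOf hp hpos, fun t ht => ?_, fun v hv => ?_⟩
  · exact fun t ht => Finset.mem_powerset.1 (Finset.mem_filter.1 ht).1
  · simpa using (Module.finrank_eq_card_basis (basis t ht)).symm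
  · obtain ⟨n, hn⟩ := (dotProductEquiv ℝ (Fin 3)).surjective ((basis t ht).constr ℝ 1)
    have hone (j : J) (hj : j ∈ t) : dotProductEquiv ℝ (Fin 3) n (p j) = 1 := by
      simpa [hn, basis] using (basis t ht).constr_basis ℝ (1 : t → ℝ) ⟨j, hj⟩
    exact ⟨n, hone, (hcells t ht).2 _ hone⟩
  · obtain ⟨f, hf⟩ := hexposed v hv
    obtain ⟨e, hev, he⟩ := exists_exposing_normalized hp hf
    obtain ⟨e, rfl⟩ := (dotProductEquiv ℝ (Fin 3)).surjective e
    exact ⟨e, hev, he⟩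

end ExistsFan

section BarycentricInterpolation

variable {E M : Type*} [AddCommGroup E] [Module ℝ E] [AddCommGroup M] [Module ℝ M]

lemma sum_smul_apply_sum_smul_eq_zero {J : Type*} {s : Finset J} {σ : J → ℝ} {w : J → E →ₗ[ℝ] ℝ}
    {p : J → E} (hσ : ∑ j ∈ s, σ j = 0)
    (hw : ∀ i ∈ s, ∀ j ∈ s, (w i - w j) (p i - p j) = 0) :
    (∑ j ∈ s, σ j • w j) (∑ j ∈ s, σ j • p j) = 0 := by
  have hexpand : ∑ i ∈ s, ∑ j ∈ s, σ i * σ j * (w i - w j) (p i - p j) = 0 :=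
    Finset.sum_eq_zero fun i hi => Finset.sum_eq_zero fun j hj => by rw [hw i hi j hj, mul_zero]
  have hsplit (i j : J) : σ i * σ j * (w i - w j) (p i - p j) =
      σ i * w i (p i) * σ j - σ i * σ j * w i (p j) - σ j * σ i * w j (p i) +
        σ i * (σ j * w j (p j)) := by
    simp only [LinearMap.sub_apply, map_sub]
    ring
  have hcross : (∑ j ∈ s, σ j • w j) (∑ j ∈ s, σ j • p j) =
      ∑ i ∈ s, ∑ j ∈ s, σ i * σ j * w i (p j) := by
    simp only [LinearMap.sum_apply, LinearMap.smul_apply, map_sum, map_smul, smul_eq_mul,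
      Finset.mul_sum, mul_assoc]
    exact Finset.sum_comm.trans (by simp only [mul_left_comm])
  simp only [hsplit, Finset.sum_add_distrib, Finset.sum_sub_distrib, ← Finset.mul_sum,
    ← Finset.sum_mul, hσ, mul_zero, zero_mul, add_zero, zero_sub] at hexpand
  rw [Finset.sum_neg_distrib, Finset.sum_comm (f := fun i j => σ j * σ i * w j (p i)),
    ← hcross] at hexpand
  linarith

lemma sum_smul_sub_apply_sum_smul_sub_eq_zero {J : Type*} {s : Finset J} {α β : J → ℝ}
    {w : J → E →ₗ[ℝ] ℝ} {p : J → E} (hαβ : ∑ j ∈ s, α j = ∑ j ∈ s, β j)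
    (hw : ∀ i ∈ s, ∀ j ∈ s, (w i - w j) (p i - p j) = 0) :
    (∑ j ∈ s, α j • w j - ∑ j ∈ s, β j • w j) (∑ j ∈ s, α j • p j - ∑ j ∈ s, β j • p j) = 0 := by
  have hsum := sum_smul_apply_sum_smul_eq_zero (σ := fun j => α j - β j)
    (by rw [Finset.sum_sub_distrib, hαβ, sub_self]) hw
  have hsub (j : J) : (α j - β j) • w j = α j • w j - β j • w j := by module
  simpa only [hsub, sub_smul, Finset.sum_sub_distrib] using hsum

lemma sum_smul_eq_of_affineIndependent {t s : Finset E}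
    (ht : AffineIndependent ℝ (fun x : (t : Set E) => (x : E))) (hs : s ⊆ t) {α γ : E → ℝ}
    (hα : ∑ x ∈ t, α x = 1) (hγ : ∑ x ∈ s, γ x = 1)
    (he : ∑ x ∈ s, γ x • x = ∑ x ∈ t, α x • x) (w : E → M) :
    ∑ x ∈ s, γ x • w x = ∑ x ∈ t, α x • w x := by
  have hcoeff := affineIndependent_iff.1 ht t.attach
    (fun x => α x - if (x : E) ∈ s then γ x else 0) ?_ ?_
  · rw [sum_smul_eq_sum_ite_smul hs]
    exact Finset.sum_congr rfl fun x hx => by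
      rw [sub_eq_zero.1 (hcoeff ⟨x, hx⟩ (t.mem_attach _))]
  · have hγt := sum_smul_eq_sum_ite_smul hs γ (1 : E → ℝ)
    simp only [Pi.one_apply, smul_eq_mul, mul_one, hγ] at hγt
    refine (t.sum_attach fun x => α x - if x ∈ s then γ x else 0).trans ?_
    rw [Finset.sum_sub_distrib, hα, ← hγt, sub_self]
  · refine (t.sum_attach fun x => (α x - if x ∈ s then γ x else 0) • x).trans ?_
    simp only [sub_smul, Finset.sum_sub_distrib]
    rw [← sum_smul_eq_sum_ite_smul hs, he, sub_self]

/-- Barycentric coordinates with respect to two simplices agree on a common face. -/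
lemma exists_barycentric_interpolation {T : Finset (Finset E)}
    (haff : ∀ t ∈ T, AffineIndependent ℝ (fun x : (t : Set E) => (x : E)))
    (hinter : ∀ t ∈ T, ∀ t' ∈ T, convexHull ℝ (t : Set E) ∩ convexHull ℝ (t' : Set E) ⊆
      convexHull ℝ ((t ∩ t' : Finset E) : Set E)) (w : E → M) :
    ∃ W : E → M, ∀ t ∈ T, ∀ α : E → ℝ, (∀ x ∈ t, 0 ≤ α x) → ∑ x ∈ t, α x = 1 →
      W (∑ x ∈ t, α x • x) = ∑ x ∈ t, α x • w x := by
  have hvalue (y : E) : ∃ m : M, ∀ t ∈ T, ∀ α : E → ℝ, (∀ x ∈ t, 0 ≤ α x) → ∑ x ∈ t, α x = 1 →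
      ∑ x ∈ t, α x • x = y → ∑ x ∈ t, α x • w x = m := by
    by_cases hy : ∃ t ∈ T, y ∈ convexHull ℝ (t : Set E)
    · obtain ⟨t, ht, hyt⟩ := hy
      obtain ⟨α, -, hα1, hαy⟩ := Finset.mem_convexHull'.1 hyt
      refine ⟨∑ x ∈ t, α x • w x, fun t' ht' β hβ hβ1 hβy => ?_⟩
      obtain ⟨γ, -, hγ1, hγy⟩ := Finset.mem_convexHull'.1
        (hinter t ht t' ht' ⟨hyt, Finset.mem_convexHull'.2 ⟨β, hβ, hβ1, hβy⟩⟩)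
      rw [← sum_smul_eq_of_affineIndependent (haff t ht) Finset.inter_subset_left hα1 hγ1
          (hγy.trans hαy.symm),
        sum_smul_eq_of_affineIndependent (haff t' ht') Finset.inter_subset_right hβ1 hγ1
          (hγy.trans hβy.symm)]
    · exact ⟨0, fun t ht α hα hα1 hαy =>
        absurd ⟨t, ht, Finset.mem_convexHull'.2 ⟨α, hα, hα1, hαy⟩⟩ hy⟩
  choose W hW using hvalue
  exact ⟨W, fun t ht α hα hα1 => (hW _ t ht α hα hα1 rfl).symm⟩

end BarycentricInterpolation

section SimplicialCover

lemma apply_eq_of_isPreconnected_of_closed_cover {X ι D : Type*} [TopologicalSpace X] {S : Set X}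
    (hS : IsPreconnected S) {T : Finset ι} {C : ι → Set X} (hC : ∀ i ∈ T, IsClosed (C i))
    (hcover : S ⊆ ⋃ i ∈ T, C i) {g : X → D}
    (hg : ∀ i ∈ T, ∀ x ∈ S ∩ C i, ∀ y ∈ S ∩ C i, g x = g y) {x y : X} (hx : x ∈ S) (hy : y ∈ S) :
    g x = g y := by
  have himage {i : ι} (hi : i ∈ T) {z : X} (hz : z ∈ S ∩ C i) : g '' (S ∩ C i) = {g z} :=
    Set.eq_singleton_iff_unique_mem.2
      ⟨⟨z, hz, rfl⟩, Set.forall_mem_image.2 fun z' hz' => hg i hi z' hz' z hz⟩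
  obtain ⟨i, hi, hxi⟩ := Set.mem_iUnion₂.1 (hcover hx)
  obtain ⟨j, hj, hyj⟩ := Set.mem_iUnion₂.1 (hcover hy)
  have heq := eq_of_isPreconnected_of_closed_cover hS hC hcover (f := fun i => g '' (S ∩ C i))
    (fun i hi j hj ⟨z, hzS, hzi, hzj⟩ => by rw [himage hi ⟨hzS, hzi⟩, himage hj ⟨hzS, hzj⟩])
    hi hj ⟨x, hx, hxi⟩ ⟨y, hy, hyj⟩
  simpa only [himage hi ⟨hx, hxi⟩, himage hj ⟨hy, hyj⟩, Set.singleton_eq_singleton_iff] using heq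

variable {E : Type*} [NormedAddCommGroup E] [NormedSpace ℝ E]

lemma apply_eq_of_apply_sub_eq_zero_of_mem_segment {x y u v : E} (hx : x ∈ segment ℝ u v)
    (hy : y ∈ segment ℝ u v) {f g : E →ₗ[ℝ] ℝ} (hfg : (f - g) (x - y) = 0)
    (heq : x = y → f = g) : f (u - v) = g (u - v) := by
  rw [segment_eq_image_lineMap] at hx hy
  obtain ⟨a, -, rfl⟩ := hx
  obtain ⟨b, -, rfl⟩ := hy
  obtain rfl | hab := eq_or_ne a b
  · rw [heq rfl]
  · have hsub : AffineMap.lineMap u v a - AffineMap.lineMap u v b = (b - a) • (u - v) := by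
      simp only [AffineMap.lineMap_apply_module]
      module
    rw [hsub, map_smul, smul_eq_zero_iff_right (sub_ne_zero.2 hab.symm)] at hfg
    exact sub_eq_zero.1 hfg

/-- Along the segment from `u` to `v`, the component in the direction `u - v` of the piecewise
linear interpolation of `w` is constant. -/
theorem apply_sub_eq_zero_of_simplicial_cover {T : Finset (Finset E)} {w : E → E →ₗ[ℝ] ℝ}
    (haff : ∀ t ∈ T, AffineIndependent ℝ (fun x : (t : Set E) => (x : E)))
    (hinter : ∀ t ∈ T, ∀ t' ∈ T, convexHull ℝ (t : Set E) ∩ convexHull ℝ (t' : Set E) ⊆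
      convexHull ℝ ((t ∩ t' : Finset E) : Set E))
    (hconvex : Convex ℝ (⋃ t ∈ T, convexHull ℝ (t : Set E)))
    (hw : ∀ t ∈ T, ∀ u ∈ t, ∀ v ∈ t, (w u - w v) (u - v) = 0) {t t' : Finset E} (ht : t ∈ T)
    (ht' : t' ∈ T) {u v : E} (hu : u ∈ t) (hv : v ∈ t') : (w u - w v) (u - v) = 0 := by
  obtain ⟨W, hW⟩ := exists_barycentric_interpolation haff hinter w
  have hWvertex {s : Finset E} (hs : s ∈ T) {x : E} (hx : x ∈ s) : W x = w x := by
    simpa [Pi.single_apply, hx] using hW s hs (Pi.single x 1)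
      (fun y _ => by rw [Pi.single_apply]; split_ifs <;> simp) (by simp [Pi.single_apply, hx])
  have hWsub (s : Finset E) (hs : s ∈ T) (x y : E) (hx : x ∈ convexHull ℝ (s : Set E))
      (hy : y ∈ convexHull ℝ (s : Set E)) : (W x - W y) (x - y) = 0 := by
    obtain ⟨α, hα, hα1, rfl⟩ := Finset.mem_convexHull'.1 hx
    obtain ⟨β, hβ, hβ1, rfl⟩ := Finset.mem_convexHull'.1 hy
    rw [hW s hs α hα hα1, hW s hs β hβ hβ1]
    exact sum_smul_sub_apply_sum_smul_sub_eq_zero (hα1.trans hβ1.symm) (hw s hs)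
  have hmem {s : Finset E} (hs : s ∈ T) {x : E} (hx : x ∈ s) :
      x ∈ ⋃ t ∈ T, convexHull ℝ (t : Set E) :=
    Set.mem_iUnion₂.2 ⟨s, hs, subset_convexHull ℝ _ hx⟩
  have hconst : W u (u - v) = W v (u - v) :=
    apply_eq_of_isPreconnected_of_closed_cover (convex_segment u v).isPreconnected
      (fun s _ => s.finite_toSet.isClosed_convexHull ℝ)
      (hconvex.segment_subset (hmem ht hu) (hmem ht' hv)) (g := fun x => W x (u - v))
      (fun s hs x hx y hy => apply_eq_of_apply_sub_eq_zero_of_mem_segment hx.1 hy.1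
        (hWsub s hs x y hx.2 hy.2) (congrArg W))
      (left_mem_segment ..) (right_mem_segment ..)
  rw [← hWvertex ht hu, ← hWvertex ht' hv, LinearMap.sub_apply, hconst, sub_self]

end SimplicialCover

section ExtremePoints

variable {E : Type*} [NormedAddCommGroup E] [NormedSpace ℝ E]

lemma exists_dual_lt_of_mem_extremePoints_convexHull {V : Finset E} {v : E}
    (hv : v ∈ (convexHull ℝ (V : Set E)).extremePoints ℝ) :
    ∃ f : E →ₗ[ℝ] ℝ, ∀ u ∈ V, u ≠ v → f u < f v := by
  have hconvex : Convex ℝ (convexHull ℝ (V : Set E) \ {v}) :=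
    ((convex_convexHull ℝ _).mem_extremePoints_iff_convex_sdiff.1 hv).2
  have hsub : convexHull ℝ ((V : Set E) \ {v}) ⊆ convexHull ℝ (V : Set E) \ {v} :=
    convexHull_min (Set.sdiff_subset_sdiff_left (subset_convexHull ℝ _)) hconvex
  have hclosed : IsClosed (convexHull ℝ ((V : Set E) \ {v})) :=
    V.finite_toSet.sdiff.isClosed_convexHull (𝕜 := ℝ)
  obtain ⟨f, c, hlt, hcv⟩ := geometric_hahn_banach_closed_point (convex_convexHull ℝ _) hclosed
    fun hmem => (hsub hmem).2 rfl
  exact ⟨f, fun u hu huv => (hlt u (subset_convexHull ℝ _ ⟨hu, huv⟩)).trans hcv⟩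

end ExtremePoints

section LinearSlice

variable {J E F : Type*} [AddCommGroup E] [Module ℝ E] [AddCommGroup F] [Module ℝ F]
  {q : J → E} {V : Finset J} {φ : F →ₗ[ℝ] E}

lemma exists_pos_forall_mul_sub_le {α β : J → ℝ} (hα : ∀ j ∈ V, 0 ≤ α j)
    (hβ : ∀ j ∈ V, α j = 0 → β j = 0) : ∃ ε > 0, ∀ j ∈ V, ε * (β j - α j) ≤ α j := by
  have hev : ∀ᶠ ε in nhdsWithin (0 : ℝ) (Set.Ioi 0), ∀ j ∈ V, ε * (β j - α j) ≤ α j := by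
    refine V.eventually_all.2 fun j hj => ?_
    obtain h0 | hpos := (hα j hj).eq_or_lt
    · exact Filter.Eventually.of_forall fun ε => by simp [← h0, hβ j hj h0.symm]
    · have htendsto : Filter.Tendsto (fun ε : ℝ => ε * (β j - α j)) (nhdsWithin 0 (Set.Ioi 0))
          (nhds (0 * (β j - α j))) := (Continuous.tendsto (by fun_prop) 0).mono_left inf_le_left
      rw [zero_mul] at htendsto
      filter_upwards [htendsto.eventually (gt_mem_nhds hpos)] with ε hε using hε.le
  obtain ⟨ε, hε, hpos⟩ := (hev.and self_mem_nhdsWithin).exists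
  exact ⟨ε, hpos, hε⟩

/-- Move from `y` through `x` and slightly beyond: the extrapolated weights stay nonnegative. -/
lemma eq_of_mem_extremePoints_preimage_convexHull {x y : F}
    (hx : x ∈ (φ ⁻¹' convexHull ℝ (q '' V)).extremePoints ℝ) {α β : J → ℝ}
    (hα : ∀ j ∈ V, 0 ≤ α j) (hα1 : ∑ j ∈ V, α j = 1) (hαx : ∑ j ∈ V, α j • q j = φ x)
    (hβ : ∀ j ∈ V, 0 ≤ β j) (hβ1 : ∑ j ∈ V, β j = 1) (hβy : ∑ j ∈ V, β j • q j = φ y)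
    (hαβ : ∀ j ∈ V, α j = 0 → β j = 0) : x = y := by
  obtain ⟨ε, hε, hle⟩ := exists_pos_forall_mul_sub_le hα hαβ
  have hz : x - ε • (y - x) ∈ φ ⁻¹' convexHull ℝ (q '' V) := by
    refine mem_convexHull_image_iff_exists_sum.2 ⟨fun j => α j - ε * (β j - α j),
      fun j hj => sub_nonneg.2 (hle j hj), ?_, ?_⟩
    · simp [Finset.sum_sub_distrib, ← Finset.mul_sum, hα1, hβ1]
    · simp [sub_smul, mul_smul, Finset.sum_sub_distrib, ← Finset.smul_sum, hαx, hβy]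
  have hy : y ∈ φ ⁻¹' convexHull ℝ (q '' V) :=
    mem_convexHull_image_iff_exists_sum.2 ⟨β, hβ, hβ1, hβy⟩
  have hseg : x ∈ openSegment ℝ (x - ε • (y - x)) y := by
    refine ⟨1 / (1 + ε), ε / (1 + ε), by positivity, by positivity, by field_simp, ?_⟩
    have hcancel : (1 / (1 + ε)) • (1 + ε) • x = x := by
      rw [smul_smul, one_div_mul_cancel (by positivity), one_smul]
    linear_combination (norm := module) hcancel
  exact ((mem_extremePoints.1 hx).2 _ hz y hy hseg).2.symm

lemma finite_extremePoints_preimage_convexHull :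
    ((φ ⁻¹' convexHull ℝ (q '' V)).extremePoints ℝ).Finite := by
  have hrep (x : F) (hx : x ∈ (φ ⁻¹' convexHull ℝ (q '' V)).extremePoints ℝ) :=
    mem_convexHull_image_iff_exists_sum.1 hx.1
  choose! A hA hA1 hAx using hrep
  refine Set.Finite.of_finite_image (f := fun x => {j ∈ V | A x j = 0})
    (V.powerset.finite_toSet.subset ?_) fun x hx y hy hxy => ?_
  · rintro _ ⟨x, -, rfl⟩
    exact Finset.mem_coe.2 (Finset.mem_powerset.2 (Finset.filter_subset _ V))
  · refine eq_of_mem_extremePoints_preimage_convexHull hx (hA x hx) (hA1 x hx) (hAx x hx)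
      (hA y hy) (hA1 y hy) (hAx y hy) fun j hj h0 => ?_
    exact (Finset.mem_filter.1 (hxy.le (Finset.mem_filter.2 ⟨hj, h0⟩))).2

lemma mem_coneOf_id_of_convexHull_eq_preimage {X : Finset F}
    (hX : convexHull ℝ (X : Set F) = φ ⁻¹' convexHull ℝ (q '' V)) {y : F} (hy0 : φ y ≠ 0)
    (hy : φ y ∈ coneOf q V) : y ∈ coneOf id X := by
  obtain ⟨r, hr, hmem⟩ := exists_smul_mem_convexHull_of_mem_coneOf hy hy0
  have hry : r • y ∈ convexHull ℝ (id '' (X : Set F)) := by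
    rwa [Set.image_id, hX, Set.mem_preimage, map_smul]
  obtain ⟨α, hα, -, hαy⟩ := mem_convexHull_image_iff_exists_sum.1 hry
  have hcone : r • y ∈ coneOf id X := ⟨α, hα, hαy⟩
  simpa [smul_smul, inv_mul_cancel₀ hr.ne'] using smul_mem_coneOf hcone (inv_nonneg.2 hr.le)

lemma sum_smul_eq_of_exposed {M : Type*} [AddCommGroup M] [Module ℝ M] {f : E →ₗ[ℝ] ℝ} {u : J}
    (hu : u ∈ V) (hf : ∀ v ∈ V, v ≠ u → f (q v) < f (q u)) {α : J → ℝ}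
    (hα : ∀ j ∈ V, 0 ≤ α j) (hα1 : ∑ j ∈ V, α j = 1) (hαu : f (∑ j ∈ V, α j • q j) = f (q u))
    (g : J → M) : ∑ j ∈ V, α j • g j = g u := by
  have hle (j : J) (hj : j ∈ V) : f (q j) ≤ f (q u) := by
    obtain rfl | hju := eq_or_ne j u
    exacts [le_rfl, (hf j hj hju).le]
  have h0 (j : J) (hj : j ∈ V) (hju : j ≠ u) : α j = 0 :=
    eq_zero_of_apply_sum_smul_eq hle hα (by rw [hαu, hα1, one_mul]) hj (hf j hj hju).ne
  have h1 : α u = 1 := by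
    rw [← hα1, Finset.sum_eq_single_of_mem u hu h0]
  rw [Finset.sum_eq_single_of_mem u hu fun j hj hju => by rw [h0 j hj hju, zero_smul], h1,
    one_smul]

lemma mem_extremePoints_convexHull_of_exposed {f : E →ₗ[ℝ] ℝ} {u : J} (hu : u ∈ V)
    (hf : ∀ v ∈ V, v ≠ u → f (q v) < f (q u)) :
    q u ∈ (convexHull ℝ (q '' V)).extremePoints ℝ := by
  have hle {z : E} (hz : z ∈ convexHull ℝ (q '' V)) : f z ≤ f (q u) := by
    refine apply_le_of_mem_convexHull ?_ hz
    rintro _ ⟨j, hj, rfl⟩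
    obtain rfl | hju := eq_or_ne j u
    exacts [le_rfl, (hf j hj hju).le]
  have heq {z : E} (hz : z ∈ convexHull ℝ (q '' V)) (hfz : f z = f (q u)) : z = q u := by
    obtain ⟨α, hα, hα1, rfl⟩ := mem_convexHull_image_iff_exists_sum.1 hz
    exact sum_smul_eq_of_exposed hu hf hα hα1 hfz q
  refine ⟨subset_convexHull ℝ _ (Set.mem_image_of_mem q hu), fun x hx y hy hseg => ?_⟩
  obtain ⟨a, b, ha, hb, hab, hsum⟩ := hseg
  refine heq hx (le_antisymm (hle hx) ?_)
  have hfsum := congr_arg f hsum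
  simp only [map_add, map_smul, smul_eq_mul] at hfsum
  refine le_of_mul_le_mul_left ?_ ha
  have hy' := mul_le_mul_of_nonneg_left (hle hy) hb.le
  have hsplit : a * f (q u) + b * f (q u) = f (q u) := by rw [← add_mul, hab, one_mul]
  linarith

lemma mem_extremePoints_preimage (hφ : Function.Injective φ) {s : Set E} {a : F}
    (ha : φ a ∈ s.extremePoints ℝ) : a ∈ (φ ⁻¹' s).extremePoints ℝ := by
  refine ⟨ha.1, fun x hx y hy hseg => hφ (ha.2 hx hy ?_)⟩
  have himage := image_openSegment ℝ φ.toAffineMap x y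
  exact himage.le (Set.mem_image_of_mem φ hseg)

end LinearSlice

section RankThreeSubspace

variable {E : Type*} [AddCommGroup E] [Module ℝ E] [FiniteDimensional ℝ E]

lemma exists_submodule_between_finrank_eq {U W : Submodule ℝ E} {m : ℕ} (hUW : U ≤ W)
    (hU : Module.finrank ℝ U ≤ m) (hW : m ≤ Module.finrank ℝ W) :
    ∃ U' : Submodule ℝ E, U ≤ U' ∧ U' ≤ W ∧ Module.finrank ℝ U' = m := by
  induction m, hU using Nat.le_induction with
  | base => exact ⟨U, le_rfl, hUW, rfl⟩
  | succ m _ ih =>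
    obtain ⟨U', hUU', hU'W, hrank⟩ := ih (by omega)
    obtain ⟨x, hxW, hxU'⟩ : ∃ x ∈ W, x ∉ U' :=
      SetLike.exists_of_lt (hU'W.lt_of_ne (by rintro rfl; omega))
    exact ⟨U' ⊔ Submodule.span ℝ {x}, hUU'.trans le_sup_left,
      sup_le hU'W ((Submodule.span_singleton_le_iff_mem x W).2 hxW),
      by rw [Submodule.finrank_sup_span_singleton hxU', hrank]⟩

lemma exists_injective_fin_three_mem_range {W : Submodule ℝ E} (hW : 3 ≤ Module.finrank ℝ W)
    {x y : E} (hx : x ∈ W) (hy : y ∈ W) :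
    ∃ φ : (Fin 3 → ℝ) →ₗ[ℝ] E, Function.Injective φ ∧ (∀ z, φ z ∈ W) ∧
      x ∈ LinearMap.range φ ∧ y ∈ LinearMap.range φ := by
  have hrank : Module.finrank ℝ (Submodule.span ℝ (({x, y} : Finset E) : Set E)) ≤ 3 :=
    (finrank_span_finset_le_card _).trans (Finset.card_le_two.trans (by norm_num))
  obtain ⟨U, hxyU, hUW, hU⟩ :=
    exists_submodule_between_finrank_eq (W := W) (by simp [Submodule.span_le, Set.insert_subset_iff,
      hx, hy]) hrank hW
  let e : (Fin 3 → ℝ) ≃ₗ[ℝ] U := LinearEquiv.ofFinrankEq _ _ (by rw [hU, Module.finrank_fin_fun])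
  have hrange : LinearMap.range (U.subtype ∘ₗ e.toLinearMap) = U := by
    rw [LinearMap.range_comp, LinearEquiv.range, Submodule.map_subtype_top]
  refine ⟨U.subtype ∘ₗ e.toLinearMap, U.injective_subtype.comp e.injective,
    fun z => hUW (e z).2, ?_, ?_⟩ <;>
  · rw [hrange]
    exact hxyU (Submodule.subset_span (by simp))

end RankThreeSubspace

section FacetVelocity

variable {J E : Type*} [AddCommGroup E] [Module ℝ E] {q : J → E} {V : Finset J} {k : E →ₗ[ℝ] ℝ}

lemma sum_filter_tight_smul {M : Type*} [AddCommGroup M] [Module ℝ M] {c : ℝ}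
    (hk : ∀ j ∈ V, k (q j) ≤ c) {α : J → ℝ} (hα : ∀ j ∈ V, 0 ≤ α j) (hα1 : ∑ j ∈ V, α j = 1)
    (hkα : k (∑ j ∈ V, α j • q j) = c) (g : J → M) :
    ∑ j ∈ V with k (q j) = c, α j • g j = ∑ j ∈ V, α j • g j := by
  refine Finset.sum_subset (Finset.filter_subset _ V) fun j hj hjk => ?_
  rw [eq_zero_of_apply_sum_smul_eq hk hα (by rw [hkα, hα1, one_mul]) hj fun h =>
    hjk (Finset.mem_filter.2 ⟨hj, h⟩), zero_smul]

lemma sum_smul_sub_apply_eq_zero_of_tight {w : J → E →ₗ[ℝ] ℝ} (hk : ∀ j ∈ V, k (q j) ≤ 1)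
    (hw : ∀ u ∈ V, ∀ v ∈ V, k (q u) = 1 → k (q v) = 1 → (w u - w v) (q u - q v) = 0)
    {α β : J → ℝ} (hα : ∀ j ∈ V, 0 ≤ α j) (hα1 : ∑ j ∈ V, α j = 1)
    (hkα : k (∑ j ∈ V, α j • q j) = 1) (hβ : ∀ j ∈ V, 0 ≤ β j) (hβ1 : ∑ j ∈ V, β j = 1)
    (hkβ : k (∑ j ∈ V, β j • q j) = 1) :
    (∑ j ∈ V, α j • w j - ∑ j ∈ V, β j • w j)
      (∑ j ∈ V, α j • q j - ∑ j ∈ V, β j • q j) = 0 := by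
  have hαsum := sum_filter_tight_smul hk hα hα1 hkα (1 : J → ℝ)
  have hβsum := sum_filter_tight_smul hk hβ hβ1 hkβ (1 : J → ℝ)
  simp only [Pi.one_apply, smul_eq_mul, mul_one, hα1, hβ1] at hαsum hβsum
  have hrigid := sum_smul_sub_apply_sum_smul_sub_eq_zero (hαsum.trans hβsum.symm)
    fun u hu v hv => by
      rw [Finset.mem_filter] at hu hv
      exact hw u hu.1 v hv.1 hu.2 hv.2
  rwa [sum_filter_tight_smul hk hα hα1 hkα w, sum_filter_tight_smul hk hβ hβ1 hkβ w,
    sum_filter_tight_smul hk hα hα1 hkα q, sum_filter_tight_smul hk hβ hβ1 hkβ q] at hrigid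

end FacetVelocity

section Slice

variable {J E : Type*} [NormedAddCommGroup E] [NormedSpace ℝ E] {q : J → E} {V : Finset J}

lemma exists_finset_eq_extremePoints_preimage {F : Type*} [NormedAddCommGroup F]
    [NormedSpace ℝ F] [FiniteDimensional ℝ F] {φ : F →ₗ[ℝ] E} (hφ : Function.Injective φ) :
    ∃ X : Finset F, (X : Set F) = (φ ⁻¹' convexHull ℝ (q '' V)).extremePoints ℝ ∧
      convexHull ℝ (X : Set F) = φ ⁻¹' convexHull ℝ (q '' V) := by
  have hfinite := finite_extremePoints_preimage_convexHull (q := q) (V := V) (φ := φ)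
  have hcompact : IsCompact (φ ⁻¹' convexHull ℝ (q '' V)) :=
    (LinearMap.isClosedEmbedding_of_injective (LinearMap.ker_eq_bot.2 hφ)).isCompact_preimage
      ((V.finite_toSet.image q).isCompact_convexHull (𝕜 := ℝ))
  refine ⟨hfinite.toFinset, hfinite.coe_toFinset, ?_⟩
  rw [hfinite.coe_toFinset, ← (hfinite.isClosed_convexHull (𝕜 := ℝ)).closure_eq]
  exact closure_convexHull_extremePoints hcompact ((convex_convexHull ℝ _).linear_preimage φ)

lemma exists_convexFan_of_coe_eq_extremePoints {X : Finset (Fin 3 → ℝ)}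
    (hX : (X : Set (Fin 3 → ℝ)) = (convexHull ℝ (X : Set (Fin 3 → ℝ))).extremePoints ℝ)
    (hcone : ∀ y, y ∈ coneOf id X) : ∃ T, ConvexFan X id T :=
  exists_convexFan hcone fun _ hv =>
    exists_dual_lt_of_mem_extremePoints_convexHull (hX.le (Finset.mem_coe.2 hv))

variable [FiniteDimensional ℝ E] {W : Submodule ℝ E}

lemma exists_facet_apply_eq_one (hqW : ∀ j ∈ V, q j ∈ W) (hq : ∀ y ∈ W, y ∈ coneOf q V)
    {x y : E} (hx : x ∈ convexHull ℝ (q '' V)) (hy : y ∈ convexHull ℝ (q '' V))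
    (hmax : ∀ r : ℝ, r • (x + y) ∈ convexHull ℝ (q '' V) → 2 * r ≤ 1) :
    ∃ k : E →ₗ[ℝ] ℝ, (∀ j ∈ V, k (q j) ≤ 1) ∧
      Submodule.span ℝ (q '' {j ∈ V | k (q j) = 1}) = W ∧ k x = 1 ∧ k y = 1 := by
  have hsubW : convexHull ℝ (q '' V) ⊆ W := convexHull_min (Set.image_subset_iff.2 hqW) W.convex
  obtain ⟨k, hk, hcone, hspan⟩ := exists_facet_mem_coneOf_of_mem hqW hq
    (W.add_mem (hsubW hx) (hsubW hy))
  have hle {z : E} (hz : z ∈ convexHull ℝ (q '' V)) : k z ≤ 1 :=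
    apply_le_of_mem_convexHull (by simpa using hk) hz
  have hne : x + y ≠ 0 := fun h0 => by
    have hmid := convex_convexHull ℝ _ hx hy one_half_pos.le one_half_pos.le (add_halves (1 : ℝ))
    rw [← smul_add, h0, smul_zero] at hmid
    linarith [hmax 1 (by rwa [h0, smul_zero])]
  obtain ⟨r, hr, hmem⟩ := exists_smul_mem_convexHull_of_mem_coneOf hcone hne
  have hr2 : 2 * r ≤ 1 := hmax r <|
    convexHull_mono (Set.image_mono (Finset.coe_subset.2 (Finset.filter_subset _ V))) hmem
  have hone : 1 ≤ r * (k x + k y) := by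
    have hneg := apply_le_of_mem_convexHull (f := -k) (c := -1)
      (by rintro _ ⟨j, hj, rfl⟩; simp [(Finset.mem_filter.1 hj).2]) hmem
    simpa [mul_add] using hneg
  have hkx := hle hx
  have hky := hle hy
  have hsum : 2 ≤ k x + k y := by nlinarith
  exact ⟨k, hk, hspan, by linarith, by linarith⟩

variable {w : J → E →ₗ[ℝ] ℝ} {φ : (Fin 3 → ℝ) →ₗ[ℝ] E}
  {X : Finset (Fin 3 → ℝ)} {T : Finset (Finset (Fin 3 → ℝ))}

/-- Any two vertices of a cell lie on a common facet of the slice, hence on a common facet of the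
whole hull, where the velocities extend affinely. -/
lemma sum_smul_sub_apply_eq_zero_of_mem_cell (hqW : ∀ j ∈ V, q j ∈ W)
    (hq : ∀ y ∈ W, y ∈ coneOf q V)
    (hw : ∀ k : E →ₗ[ℝ] ℝ, (∀ j ∈ V, k (q j) ≤ 1) →
      Submodule.span ℝ (q '' {j ∈ V | k (q j) = 1}) = W →
      ∀ u ∈ V, ∀ v ∈ V, k (q u) = 1 → k (q v) = 1 → (w u - w v) (q u - q v) = 0)
    (hX : convexHull ℝ (X : Set (Fin 3 → ℝ)) = φ ⁻¹' convexHull ℝ (q '' V))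
    (hT : ConvexFan X id T) {A : (Fin 3 → ℝ) → J → ℝ} (hA : ∀ x ∈ X, ∀ j ∈ V, 0 ≤ A x j)
    (hA1 : ∀ x ∈ X, ∑ j ∈ V, A x j = 1) (hAx : ∀ x ∈ X, ∑ j ∈ V, A x j • q j = φ x)
    {t : Finset (Fin 3 → ℝ)} (ht : t ∈ T) {x y : Fin 3 → ℝ} (hx : x ∈ t) (hy : y ∈ t) :
    (∑ j ∈ V, A x j • w j - ∑ j ∈ V, A y j • w j) (φ (x - y)) = 0 := by
  have hmem {z : Fin 3 → ℝ} (hz : z ∈ X) : φ z ∈ convexHull ℝ (q '' V) :=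
    hX.le (subset_convexHull ℝ _ hz)
  have hxX := hT.subset t ht hx
  have hyX := hT.subset t ht hy
  obtain ⟨n, hn1, hnX⟩ := hT.exists_normal t ht
  obtain ⟨k, hk, hspan, hkx, hky⟩ := exists_facet_apply_eq_one hqW hq (hmem hxX) (hmem hyX)
    fun r hr => by
      have hrX : r • (x + y) ∈ convexHull ℝ (X : Set (Fin 3 → ℝ)) := by
        rwa [hX, Set.mem_preimage, map_smul, map_add]
      have hle := apply_le_of_mem_convexHull (f := dotProductEquiv ℝ (Fin 3) n) hnX hrX
      have hxy : n ⬝ᵥ (r • (x + y)) = r * (1 + 1) := by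
        rw [dotProduct_smul, dotProduct_add, smul_eq_mul]
        exact congr_arg (r * ·) (congr_arg₂ (· + ·) (hn1 x hx) (hn1 y hy))
      rw [dotProductEquiv_apply_apply, hxy] at hle
      linarith
  rw [← hAx x hxX] at hkx
  rw [← hAx y hyX] at hky
  rw [map_sub, ← hAx x hxX, ← hAx y hyX]
  exact sum_smul_sub_apply_eq_zero_of_tight hk (hw k hk hspan) (hA x hxX) (hA1 x hxX) hkx
    (hA y hyX) (hA1 y hyX) hky

/-- Slice by a three-dimensional linear subspace through `q u` and `q v`: the slice is a convex
surface which carries an induced velocity field, rigid by the three-dimensional case. -/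
theorem apply_sub_eq_zero_of_facets (hqW : ∀ j ∈ V, q j ∈ W) (hq : ∀ y ∈ W, y ∈ coneOf q V)
    (hW : 3 ≤ Module.finrank ℝ W)
    (hexposed : ∀ v ∈ V, ∃ f : E →ₗ[ℝ] ℝ, ∀ u ∈ V, u ≠ v → f (q u) < f (q v))
    (hw : ∀ k : E →ₗ[ℝ] ℝ, (∀ j ∈ V, k (q j) ≤ 1) →
      Submodule.span ℝ (q '' {j ∈ V | k (q j) = 1}) = W →
      ∀ u ∈ V, ∀ v ∈ V, k (q u) = 1 → k (q v) = 1 → (w u - w v) (q u - q v) = 0)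
    {u v : J} (hu : u ∈ V) (hv : v ∈ V) : (w u - w v) (q u - q v) = 0 := by
  obtain ⟨φ, hφ, hφW, ⟨a, ha⟩, ⟨b, hb⟩⟩ :=
    exists_injective_fin_three_mem_range hW (hqW u hu) (hqW v hv)
  obtain ⟨X, hXext, hX⟩ := exists_finset_eq_extremePoints_preimage (q := q) (V := V) hφ
  have hXcone (y : Fin 3 → ℝ) : y ∈ coneOf id X := by
    obtain rfl | hy := eq_or_ne y 0
    · exact ⟨0, by simp⟩
    · exact mem_coneOf_id_of_convexHull_eq_preimage hX ((map_ne_zero_iff φ hφ).2 hy)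
        (hq _ (hφW y))
  obtain ⟨T, hT⟩ := exists_convexFan_of_coe_eq_extremePoints (by rw [hX, hXext]) hXcone
  have hrep (x : Fin 3 → ℝ) (hx : x ∈ X) :=
    mem_convexHull_image_iff_exists_sum.1 (hX.le (subset_convexHull ℝ _ hx))
  choose! A hA hA1 hAx using hrep
  let z (x : Fin 3 → ℝ) := (dotProductEquiv ℝ (Fin 3)).symm ((∑ j ∈ V, A x j • w j) ∘ₗ φ)
  have hz (x y d : Fin 3 → ℝ) : (z x - z y) ⬝ᵥ d =
      (∑ j ∈ V, A x j • w j - ∑ j ∈ V, A y j • w j) (φ d) := by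
    rw [← dotProductEquiv_apply_apply ℝ (Fin 3), map_sub]
    simp [z]
  have hvertex {i : J} (hi : i ∈ V) {c : Fin 3 → ℝ} (hc : φ c = q i) :
      c ∈ X ∧ ∑ j ∈ V, A c j • w j = w i := by
    obtain ⟨f, hf⟩ := hexposed i hi
    have hcX : c ∈ X := Finset.mem_coe.1 <| hXext ▸ mem_extremePoints_preimage hφ
      (hc ▸ mem_extremePoints_convexHull_of_exposed hi hf)
    exact ⟨hcX, sum_smul_eq_of_exposed hi hf (hA c hcX) (hA1 c hcX) (by rw [hAx c hcX, hc]) w⟩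
  have hrigid := hT.infinitesimally_rigid (w := z) (fun t ht x hx y hy => (hz x y _).trans <|
    sum_smul_sub_apply_eq_zero_of_mem_cell hqW hq hw hX hT hA hA1 hAx ht hx hy)
    (hvertex hu ha).1 (hvertex hv hb).1
  rwa [hz, (hvertex hu ha).2, (hvertex hv hb).2, id, id, map_sub, ha, hb] at hrigid

end Slice

section ExposedSubset

variable {E : Type*} [AddCommGroup E] [Module ℝ E] {V F G : Finset E}

/-- `F` consists of the points of `V` on a supporting hyperplane of `V`; when the points of `V`
are in convex position, these are the vertex sets of the faces of their convex hull. The empty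
set and `V` itself are included. -/
def IsExposedSubset (V F : Finset E) : Prop :=
  ∃ (l : E →ₗ[ℝ] ℝ) (c : ℝ), (∀ x ∈ V, l x ≤ c) ∧ F = {x ∈ V | l x = c}

namespace IsExposedSubset

lemma refl (V : Finset E) : IsExposedSubset V V := ⟨0, 0, by simp⟩

lemma subset (h : IsExposedSubset V F) : F ⊆ V := by
  obtain ⟨l, c, -, rfl⟩ := h
  exact Finset.filter_subset _ V

/-- If `l` exposes `F` in `V` and `k` exposes `G` in `F`, then `l + ε k` exposes `G` in `V` for
small `ε > 0`. -/
lemma trans (hF : IsExposedSubset V F) (hG : IsExposedSubset F G) : IsExposedSubset V G := by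
  obtain ⟨l, c, hl, rfl⟩ := hF
  obtain ⟨k, b, hk, rfl⟩ := hG
  have hlt (x : E) (hx : x ∈ V) (hxc : l x ≠ c) : 0 < c - l x :=
    sub_pos.2 ((hl x hx).lt_of_ne hxc)
  obtain ⟨ε, hε, hsmall⟩ := exists_pos_forall_mul_sub_le (V := V \ {x ∈ V | l x = c})
    (α := fun x => c - l x) (β := fun x => c - l x + (k x - b + 1))
    (fun x hx => sub_nonneg.2 (hl x (Finset.sdiff_subset hx)))
    fun x hx h0 => absurd h0 (hlt x (by grind) (by grind)).ne'
  have hoff (x : E) (hx : x ∈ V) (hxc : l x ≠ c) : l x + ε * k x < c + ε * b := by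
    have := hsmall x (by grind)
    linarith
  have hon (x : E) (hx : x ∈ V) (hxc : l x = c) : ε * k x ≤ ε * b :=
    mul_le_mul_of_nonneg_left (hk x (by grind)) hε.le
  refine ⟨l + ε • k, c + ε * b, fun x hx => ?_, ?_⟩
  · change l x + ε * k x ≤ c + ε * b
    by_cases hxc : l x = c
    · linarith [hon x hx hxc]
    · exact (hoff x hx hxc).le
  · ext x
    simp only [Finset.mem_filter, and_assoc, and_congr_right_iff, LinearMap.add_apply,
      LinearMap.smul_apply, smul_eq_mul]
    refine fun hx => ⟨fun ⟨hxc, hxb⟩ => by rw [hxc, hxb], fun hsum => ?_⟩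
    by_cases hxc : l x = c
    · exact ⟨hxc, mul_left_cancel₀ hε.ne' (by linarith)⟩
    · exact absurd hsum (hoff x hx hxc).ne

end IsExposedSubset

end ExposedSubset

section Recentring

variable {E : Type*} [AddCommGroup E] [Module ℝ E]

lemma mem_coneOf_of_mem_span_of_sum_eq_zero {J : Type*} {q : J → E} {V : Finset J}
    (h0 : ∑ j ∈ V, q j = 0) {y : E} (hy : y ∈ Submodule.span ℝ (q '' V)) : y ∈ coneOf q V := by
  obtain ⟨a, rfl⟩ := (Submodule.mem_span_image_finset_iff_exists_fun' ℝ).1 hy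
  refine ⟨fun j => a j + ∑ i ∈ V, |a i|, fun j hj => ?_, ?_⟩
  · have hle := Finset.single_le_sum (f := fun i => |a i|) (fun i _ => abs_nonneg _) hj
    linarith [neg_abs_le (a j)]
  · simp only [add_smul, Finset.sum_add_distrib, ← Finset.smul_sum, h0, smul_zero, add_zero]

lemma span_image_sub_eq_vectorSpan_insert (s : Set E) (c : E) :
    Submodule.span ℝ ((· - c) '' s) = vectorSpan ℝ (insert c s) := by
  rw [vectorSpan_eq_span_vsub_set_right ℝ (Set.mem_insert c s), Set.image_insert_eq, vsub_self,
    Submodule.span_insert_zero]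
  rfl

lemma exists_sum_sub_eq_zero_and_span_eq_vectorSpan {V : Finset E} (hV : V.Nonempty) :
    ∃ c : E, ∑ x ∈ V, (x - c) = 0 ∧
      Submodule.span ℝ ((· - c) '' (V : Set E)) = vectorSpan ℝ (V : Set E) := by
  have hcard : (V.card : ℝ) ≠ 0 := by exact_mod_cast hV.card_pos.ne'
  refine ⟨V.centerMass (fun _ => (1 : ℝ)) id, ?_, ?_⟩
  · rw [Finset.sum_sub_distrib, Finset.sum_const, ← Nat.cast_smul_eq_nsmul ℝ]
    simp [Finset.centerMass, smul_smul, hcard]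
  · rw [span_image_sub_eq_vectorSpan_insert, vectorSpan_insert_eq_vectorSpan]
    refine convexHull_subset_affineSpan _ (V.centerMass_mem_convexHull (fun _ _ => zero_le_one) ?_
      fun x hx => hx)
    simpa using hV

lemma finrank_vectorSpan_add_one_of_apply_sub_eq_one [FiniteDimensional ℝ E] {s : Set E}
    (hs : s.Nonempty) {c : E} {k : E →ₗ[ℝ] ℝ} (hk : ∀ x ∈ s, k (x - c) = 1) :
    Module.finrank ℝ (vectorSpan ℝ s) + 1 =
      Module.finrank ℝ (Submodule.span ℝ ((· - c) '' s)) := by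
  obtain ⟨x, hx⟩ := hs
  have hker : vectorSpan ℝ s ≤ LinearMap.ker k := by
    refine Submodule.span_le.2 ?_
    rintro _ ⟨y, hy, z, hz, rfl⟩
    have := (hk y hy).trans (hk z hz).symm
    simp only [map_sub] at this
    simpa [sub_eq_zero] using this
  have hcx : c - x ∉ vectorSpan ℝ s := fun hmem => by
    have := hk x hx
    rw [← neg_sub, map_neg, hker hmem] at this
    norm_num at this
  rw [span_image_sub_eq_vectorSpan_insert, ← direction_affineSpan ℝ (insert c s),
    ← affineSpan_insert_affineSpan, AffineSubspace.direction_affineSpan_insert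
      (subset_affineSpan ℝ s hx), direction_affineSpan, sup_comm, vsub_eq_sub,
    Submodule.finrank_sup_span_singleton hcx]

end Recentring

section FaceInduction

variable {E : Type*} [NormedAddCommGroup E] [NormedSpace ℝ E] [FiniteDimensional ℝ E]
  {V : Finset E} {w : E → E →ₗ[ℝ] ℝ}

lemma apply_sub_eq_zero_of_exposed_facets (hV : 3 ≤ Module.finrank ℝ (vectorSpan ℝ (V : Set E)))
    (hexposed : ∀ v ∈ V, ∃ f : E →ₗ[ℝ] ℝ, ∀ u ∈ V, u ≠ v → f u < f v)
    (hw : ∀ G, IsExposedSubset V G →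
      Module.finrank ℝ (vectorSpan ℝ (G : Set E)) + 1 =
        Module.finrank ℝ (vectorSpan ℝ (V : Set E)) →
      ∀ u ∈ G, ∀ v ∈ G, (w u - w v) (u - v) = 0)
    {u v : E} (hu : u ∈ V) (hv : v ∈ V) : (w u - w v) (u - v) = 0 := by
  obtain ⟨c, hsum, hspan⟩ := exists_sum_sub_eq_zero_and_span_eq_vectorSpan ⟨u, hu⟩
  have hmem (x : E) (hx : x ∈ V) : x - c ∈ vectorSpan ℝ (V : Set E) :=
    hspan ▸ Submodule.subset_span (Set.mem_image_of_mem (· - c) hx)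
  have hcone (y : E) (hy : y ∈ vectorSpan ℝ (V : Set E)) : y ∈ coneOf (· - c) V :=
    mem_coneOf_of_mem_span_of_sum_eq_zero hsum (hspan.symm ▸ hy)
  have hrigid := apply_sub_eq_zero_of_facets (w := w) hmem hcone hV (fun v hv => ?_) ?_ hu hv
  · simpa using hrigid
  · obtain ⟨f, hf⟩ := hexposed v hv
    exact ⟨f, fun u hu huv => by simpa using hf u hu huv⟩
  · intro k hk hfacet x hx y hy hkx hky
    rw [sub_sub_sub_cancel_right]
    refine hw {z ∈ V | k (z - c) = 1} ⟨k, 1 + k c, fun z hz => ?_, ?_⟩ ?_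
      x (Finset.mem_filter.2 ⟨hx, hkx⟩) y (Finset.mem_filter.2 ⟨hy, hky⟩)
    · linarith [hk z hz, map_sub k z c]
    · simp only [map_sub, sub_eq_iff_eq_add]
    · rw [finrank_vectorSpan_add_one_of_apply_sub_eq_one ⟨x,
        Finset.mem_coe.2 (Finset.mem_filter.2 ⟨hx, hkx⟩)⟩ fun z hz =>
          (Finset.mem_filter.1 hz).2, ← hfacet, Finset.coe_filter]

theorem apply_sub_eq_zero_of_exposed_polygons
    (hV : 2 ≤ Module.finrank ℝ (vectorSpan ℝ (V : Set E)))
    (hexposed : ∀ v ∈ V, ∃ f : E →ₗ[ℝ] ℝ, ∀ u ∈ V, u ≠ v → f u < f v)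
    (hw : ∀ G, IsExposedSubset V G → Module.finrank ℝ (vectorSpan ℝ (G : Set E)) = 2 →
      ∀ u ∈ G, ∀ v ∈ G, (w u - w v) (u - v) = 0)
    {u v : E} (hu : u ∈ V) (hv : v ∈ V) : (w u - w v) (u - v) = 0 := by
  suffices hfaces : ∀ N ≥ 2, ∀ F, IsExposedSubset V F →
      Module.finrank ℝ (vectorSpan ℝ (F : Set E)) = N →
      ∀ u ∈ F, ∀ v ∈ F, (w u - w v) (u - v) = 0 from
    hfaces _ hV V (.refl V) rfl u hu v hv
  intro N hN
  induction N, hN using Nat.le_induction with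
  | base => exact hw
  | succ N hN ih =>
    intro F hF hrank u hu v hv
    refine apply_sub_eq_zero_of_exposed_facets (by omega) (fun v hv => ?_)
      (fun G hG hGrank => ih G (hF.trans hG) (by omega)) hu hv
    obtain ⟨f, hf⟩ := hexposed v (hF.subset hv)
    exact ⟨f, fun u hu => hf u (hF.subset hu)⟩

end FaceInduction

section Faces

variable {E : Type*} [AddCommGroup E] [Module ℝ E]

lemma IsFace.isExtreme {P F : Set E} (h : IsFace P F) : IsExtreme ℝ P F := by
  obtain rfl | rfl | ⟨l, rfl⟩ := h
  · exact IsExtreme.refl ℝ _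
  · exact ⟨Set.empty_subset _, fun _ _ _ _ _ h => h.elim⟩
  · refine ⟨fun x hx => hx.1, fun x hx y hy z hz ⟨a, b, ha, hb, hab, hxyz⟩ => ?_⟩
    refine ⟨hx, fun p hp => (hz.2 p hp).trans ?_⟩
    have hle : b * l y ≤ b * l z := mul_le_mul_of_nonneg_left (hz.2 y hy) hb.le
    have hsum : a * l x + b * l y = a * l z + b * l z := by
      rw [← add_mul, hab, one_mul, ← hxyz, map_add, map_smul, map_smul, smul_eq_mul, smul_eq_mul]
    exact le_of_mul_le_mul_left (by linarith) ha

lemma IsExposedSubset.isFace_convexHull {V F : Finset E} (h : IsExposedSubset V F)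
    (hF : F.Nonempty) : IsFace (convexHull ℝ (V : Set E)) (convexHull ℝ (F : Set E)) := by
  have hFV : convexHull ℝ (F : Set E) ⊆ convexHull ℝ (V : Set E) :=
    convexHull_mono (Finset.coe_subset.2 h.subset)
  obtain ⟨l, c, hl, rfl⟩ := h
  obtain ⟨v, hv⟩ := hF
  have hle (x : E) (hx : x ∈ convexHull ℝ (V : Set E)) : l x ≤ c := apply_le_of_mem_convexHull hl hx
  refine .inr (.inr ⟨l, Set.Subset.antisymm (fun x hx => ⟨hFV hx, fun y hy => ?_⟩) ?_⟩)
  · have hxc : l x = c := convexHull_min (t := {x | l x = c})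
      (fun y hy => (Finset.mem_filter.1 hy).2) (convex_hyperplane l.isLinear c) hx
    exact hxc ▸ hle y hy
  · rintro x ⟨hx, hmax⟩
    have hxc : l x = c := (hle x hx).antisymm <|
      (Finset.mem_filter.1 hv).2 ▸ hmax v (hFV (subset_convexHull ℝ _ hv))
    obtain ⟨α, hα, hα1, rfl⟩ := Finset.mem_convexHull'.1 hx
    refine Finset.mem_convexHull'.2
      ⟨α, fun y hy => hα y (Finset.mem_filter.1 hy).1, ?_, sum_filter_tight_smul hl hα hα1 hxc id⟩
    simpa only [Pi.one_apply, smul_eq_mul, mul_one, hα1] using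
      sum_filter_tight_smul hl hα hα1 hxc (1 : E → ℝ)

lemma pdim_convexHull {s : Set E} (hs : s.Nonempty) :
    pdim (convexHull ℝ s) = Module.finrank ℝ (vectorSpan ℝ s) := by
  rw [pdim, if_neg (convexHull_nonempty_iff.2 hs).ne_empty, affineSpan_convexHull,
    direction_affineSpan]

lemma vectorSpan_eq_top_of_pdim_convexHull_eq_finrank [FiniteDimensional ℝ E] {s : Set E}
    (hdim : pdim (convexHull ℝ s) = Module.finrank ℝ E) : vectorSpan ℝ s = ⊤ := by
  obtain rfl | hs := s.eq_empty_or_nonempty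
  · rw [convexHull_empty, pdim, if_pos rfl] at hdim
    omega
  · rw [pdim_convexHull hs] at hdim
    exact Submodule.eq_top_of_finrank_eq (by exact_mod_cast hdim)

end Faces

section Vertices

variable {E : Type*} [NormedAddCommGroup E] [NormedSpace ℝ E] [FiniteDimensional ℝ E]

lemma IsPolytope.exists_finset_coe_eq_extremePoints {P : Set E} (hP : IsPolytope P) :
    ∃ V : Finset E, (V : Set E) = P.extremePoints ℝ ∧ P = convexHull ℝ (V : Set E) := by
  obtain ⟨S, rfl⟩ := hP
  obtain ⟨V, hVext, hV⟩ := exists_finset_eq_extremePoints_preimage (q := id) (V := S)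
    (φ := LinearMap.id) Function.injective_id
  simp only [LinearMap.id_coe, Set.image_id, Set.preimage_id] at hVext hV
  exact ⟨V, hVext, hV.symm⟩

lemma subset_pair_of_finrank_vectorSpan_le_one {V : Finset E}
    (hV : Module.finrank ℝ (vectorSpan ℝ (V : Set E)) ≤ 1)
    (hext : ∀ v ∈ V, v ∈ (convexHull ℝ (V : Set E)).extremePoints ℝ)
    {u v : E} (hu : u ∈ V) (hv : v ∈ V) (huv : u ≠ v) : (V : Set E) ⊆ {u, v} := by
  intro x hx
  by_contra hxuv
  simp only [Set.mem_insert_iff, Set.mem_singleton_iff, not_or] at hxuv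
  have hbtw {a b c : E} (ha : a ∈ V) (hb : b ∈ V) (hc : c ∈ V) (hba : b ≠ a) (hbc : b ≠ c) :
      ¬ Wbtw ℝ a b c := fun h =>
    ((mem_extremePoints_iff_forall_segment.1 (hext b hb)).2 a (subset_convexHull ℝ _ ha)
      c (subset_convexHull ℝ _ hc) (mem_segment_iff_wbtw.2 h)).elim hba.symm hbc.symm
  have hcol : Collinear ℝ {u, x, v} := (collinear_iff_finrank_le_one.2 hV).subset
    (by simp [Set.insert_subset_iff, hu, hv, Finset.mem_coe.1 hx])
  obtain h | h | h := hcol.wbtw_or_wbtw_or_wbtw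
  · exact hbtw hu hx hv hxuv.1 hxuv.2 h
  · exact hbtw hx hv hu (Ne.symm hxuv.2) huv.symm h
  · exact hbtw hv hu hx huv (Ne.symm hxuv.1) h

end Vertices

section RigidMotion

variable {n ι : Type*} [Fintype n]

lemma exists_skew_linearMap_apply_eq {e z : ι → n → ℝ} (he : Submodule.span ℝ (Set.range e) = ⊤)
    (hskew : ∀ i j, z i ⬝ᵥ e j = -(e i ⬝ᵥ z j)) :
    ∃ S : (n → ℝ) →ₗ[ℝ] (n → ℝ), (∀ x y, S x ⬝ᵥ y = -(x ⬝ᵥ S y)) ∧ ∀ i, S (e i) = z i := by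
  let A := Finsupp.linearCombination ℝ e
  let Z := Finsupp.linearCombination ℝ z
  have hAZ (a b : ι →₀ ℝ) : Z a ⬝ᵥ A b = -(A a ⬝ᵥ Z b) := by
    simp only [A, Z, Finsupp.linearCombination_apply, Finsupp.sum, sum_dotProduct, dotProduct_sum,
      smul_dotProduct, dotProduct_smul, hskew, smul_neg, Finset.sum_neg_distrib]
  obtain ⟨g, hg⟩ := A.exists_rightInverse_of_surjective
    ((Finsupp.range_linearCombination ℝ).trans he)
  have hAg (x : n → ℝ) : A (g x) = x := LinearMap.congr_fun hg x
  have hZ (a : ι →₀ ℝ) (ha : A a = 0) : Z a = 0 := by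
    have := hAZ a (g (Z a))
    rwa [hAg, ha, zero_dotProduct, neg_zero, dotProduct_self_eq_zero] at this
  refine ⟨Z ∘ₗ g, fun x y => ?_, fun i => ?_⟩
  · simpa only [hAg, LinearMap.comp_apply] using hAZ (g x) (g y)
  · have := hZ (g (e i) - Finsupp.single i 1) (by simp [hAg, A])
    simpa [sub_eq_zero, Z] using this

lemma exists_skew_add_const {s : Set (n → ℝ)} (hs : vectorSpan ℝ s = ⊤)
    {w : (n → ℝ) → n → ℝ} (hw : ∀ u ∈ s, ∀ v ∈ s, (w u - w v) ⬝ᵥ (u - v) = 0) :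
    ∃ (S : (n → ℝ) →ₗ[ℝ] (n → ℝ)) (b : n → ℝ),
      (∀ x y, S x ⬝ᵥ y = -(x ⬝ᵥ S y)) ∧ ∀ v ∈ s, w v = S v + b := by
  obtain rfl | ⟨o, ho⟩ := s.eq_empty_or_nonempty
  · exact ⟨0, 0, by simp, by simp⟩
  rw [vectorSpan_eq_span_vsub_set_right ℝ ho, Set.image_eq_range] at hs
  obtain ⟨S, hS, hSw⟩ := exists_skew_linearMap_apply_eq hs
    (z := fun u : s => w u - w o) fun u v => by
      have huo := hw u u.2 o ho
      have hvo := hw v v.2 o ho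
      have huv := hw u u.2 v v.2
      rw [← sub_sub_sub_cancel_right _ _ (w o), ← sub_sub_sub_cancel_right (u : n → ℝ) _ o,
        sub_dotProduct, dotProduct_sub _ (_ - o), dotProduct_sub _ (_ - o), huo, hvo] at huv
      rw [vsub_eq_sub, vsub_eq_sub, dotProduct_comm (_ - o)]
      linarith
  refine ⟨S, w o - S o, hS, fun v hv => ?_⟩
  have := hSw ⟨v, hv⟩
  rw [vsub_eq_sub, map_sub] at this
  linear_combination (norm := module) -this

end RigidMotion

section Framework

variable {d : ℕ} {P : Set (Fin d → ℝ)}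

lemma IsTriangulation.exists_mem_of_mem_extremePoints {T : Finset (Finset (Fin d → ℝ))}
    (hT : IsTriangulation P T) {u : Fin d → ℝ} (hu : u ∈ P.extremePoints ℝ) :
    ∃ t ∈ T, u ∈ t := by
  obtain ⟨-, hcover, -⟩ := hT
  obtain ⟨t, ht, hut⟩ := Set.mem_iUnion₂.1 (hcover.symm ▸ hu.1)
  have htP : convexHull ℝ (t : Set (Fin d → ℝ)) ⊆ P := fun x hx =>
    hcover.subset (Set.mem_iUnion₂_of_mem ht hx)
  exact ⟨t, ht, extremePoints_convexHull_subset
    (inter_extremePoints_subset_extremePoints_of_subset htP ⟨hut, hu⟩)⟩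

lemma IsTriangulation.apply_sub_eq_zero {T : Finset (Finset (Fin d → ℝ))}
    (hT : IsTriangulation P T) (hP : Convex ℝ P) {w : (Fin d → ℝ) → (Fin d → ℝ) →ₗ[ℝ] ℝ}
    (hw : ∀ t ∈ T, ∀ u ∈ t, ∀ v ∈ t, (w u - w v) (u - v) = 0) {u v : Fin d → ℝ}
    (hu : u ∈ P.extremePoints ℝ) (hv : v ∈ P.extremePoints ℝ) : (w u - w v) (u - v) = 0 := by
  obtain ⟨t, ht, hut⟩ := hT.exists_mem_of_mem_extremePoints hu
  obtain ⟨t', ht', hvt'⟩ := hT.exists_mem_of_mem_extremePoints hv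
  obtain ⟨htriangle, hcover, hinter⟩ := hT
  exact apply_sub_eq_zero_of_simplicial_cover (fun t ht => (htriangle t ht).2.2)
    (fun t ht t' ht' => by simpa only [Finset.coe_inter] using (hinter t ht t' ht').subset)
    (hcover.symm ▸ hP) hw ht ht' hut hvt'

variable {T : Set (Fin d → ℝ) → Finset (Finset (Fin d → ℝ))}
  {w : (Fin d → ℝ) → (Fin d → ℝ) →ₗ[ℝ] ℝ}

lemma apply_sub_eq_zero_of_isFace_of_pdim_eq_two {G : Set (Fin d → ℝ)}
    (hG : IsFace P G) (hdim : pdim G = 2) (hconvex : Convex ℝ G) (hT : IsTriangulation G (T G))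
    (hw : ∀ u v, FrameEdge P T u v → (w u - w v) (u - v) = 0) {u v : Fin d → ℝ}
    (hu : u ∈ G.extremePoints ℝ) (hv : v ∈ G.extremePoints ℝ) : (w u - w v) (u - v) = 0 := by
  refine hT.apply_sub_eq_zero hconvex (fun t ht u hu v hv => ?_) hu hv
  obtain rfl | huv := eq_or_ne u v
  · rw [sub_self, LinearMap.zero_apply]
  · exact hw u v ⟨huv, .inr ⟨G, hG, hdim, t, ht, hu, hv⟩⟩

theorem apply_sub_eq_zero_of_frameEdge (hP : IsPolytope P)
    (hT : ∀ G, IsFace P G → pdim G = 2 → IsTriangulation G (T G))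
    (hw : ∀ u v, FrameEdge P T u v → (w u - w v) (u - v) = 0) {u v : Fin d → ℝ}
    (hu : u ∈ P.extremePoints ℝ) (hv : v ∈ P.extremePoints ℝ) : (w u - w v) (u - v) = 0 := by
  obtain ⟨V, hVext, rfl⟩ := hP.exists_finset_coe_eq_extremePoints
  rw [← hVext] at hu hv
  have hext (v : Fin d → ℝ) (hv : v ∈ V) :
      v ∈ (convexHull ℝ (V : Set (Fin d → ℝ))).extremePoints ℝ := hVext ▸ hv
  obtain hV | hV := Nat.lt_or_ge (Module.finrank ℝ (vectorSpan ℝ (V : Set (Fin d → ℝ)))) 2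
  · obtain rfl | huv := eq_or_ne u v
    · rw [sub_self, LinearMap.zero_apply]
    · have hVuv : (V : Set (Fin d → ℝ)) = {u, v} :=
        (subset_pair_of_finrank_vectorSpan_le_one (by omega) hext hu hv huv).antisymm
          (Set.pair_subset hu hv)
      exact hw u v ⟨huv, .inl (.inl (by rw [hVuv, convexHull_pair]))⟩
  · refine apply_sub_eq_zero_of_exposed_polygons hV
      (fun v hv => exists_dual_lt_of_mem_extremePoints_convexHull (hext v hv)) ?_ hu hv
    intro G hG hrank u hu v hv
    have hface := hG.isFace_convexHull ⟨u, hu⟩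
    have hdim : pdim (convexHull ℝ (G : Set (Fin d → ℝ))) = 2 := by
      rw [pdim_convexHull ⟨u, hu⟩, hrank, Nat.cast_ofNat]
    have hextG (x : Fin d → ℝ) (hx : x ∈ G) :
        x ∈ (convexHull ℝ (G : Set (Fin d → ℝ))).extremePoints ℝ :=
      inter_extremePoints_subset_extremePoints_of_subset hface.isExtreme.subset
        ⟨subset_convexHull ℝ _ hx, hext x (hG.subset hx)⟩
    exact apply_sub_eq_zero_of_isFace_of_pdim_eq_two hface hdim (convex_convexHull ℝ _)
      (hT _ hface hdim) hw (hextG u hu) (hextG v hv)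

end Framework

theorem infinitesimal_rigidity_general (d : ℕ) (P : Set (Fin d → ℝ))
    (hP : IsPolytope P) (hdim : pdim P = (d : ℤ))
    (T : Set (Fin d → ℝ) → Finset (Finset (Fin d → ℝ)))
    (hT : ∀ G : Set (Fin d → ℝ), IsFace P G → pdim G = 2 → IsTriangulation G (T G))
    (w : (Fin d → ℝ) → (Fin d → ℝ))
    (hw : ∀ u v : Fin d → ℝ, FrameEdge P T u v →
      ∑ j, (w u j - w v j) * (u j - v j) = 0) :
    ∃ (S : (Fin d → ℝ) →ₗ[ℝ] (Fin d → ℝ)) (b : Fin d → ℝ),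
      (∀ x y : Fin d → ℝ, ∑ j, S x j * y j = - ∑ j, x j * S y j) ∧
      ∀ v : Fin d → ℝ, IsFace P {v} → w v = S v + b := by
  have hpairs (u : Fin d → ℝ) (hu : u ∈ P.extremePoints ℝ) (v : Fin d → ℝ)
      (hv : v ∈ P.extremePoints ℝ) : (w u - w v) ⬝ᵥ (u - v) = 0 := by
    have := apply_sub_eq_zero_of_frameEdge (w := fun v => dotProductEquiv ℝ (Fin d) (w v)) hP hT
      (fun u v huv => by rw [← map_sub]; exact hw u v huv) hu hv
    rwa [← map_sub] at this
  obtain ⟨V, hV, hPV⟩ := hP.exists_finset_coe_eq_extremePoints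
  have hspan : vectorSpan ℝ (P.extremePoints ℝ) = ⊤ :=
    vectorSpan_eq_top_of_pdim_convexHull_eq_finrank (by rw [← hV, ← hPV, hdim]; simp)
  obtain ⟨S, b, hS, hSb⟩ := exists_skew_add_const hspan hpairs
  exact ⟨S, b, hS, fun v hv => hSb v (isExtreme_singleton.1 hv.isExtreme)⟩

/-- Infinitesimal rigidity of polytope frameworks (Alexandrov, Whiteley): if
`P` is a `d`-polytope in `ℝ^d` (`d ≥ 3`), `E` consists of the edges of `P`
together with the diagonals of chosen triangulations of its 2-faces, and
`w : V(P) → ℝ^d` satisfies `⟨w(u) - w(v), u - v⟩ = 0` for all `{u,v} ∈ E`,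
then `w` is the restriction of an infinitesimal rigid motion
`x ↦ S x + b` with `S` skew-symmetric. -/
theorem infinitesimal_rigidity (d : ℕ) (hd : 3 ≤ d) (P : Set (Fin d → ℝ))
    (hP : IsPolytope P) (hdim : pdim P = (d : ℤ))
    (T : Set (Fin d → ℝ) → Finset (Finset (Fin d → ℝ)))
    (hT : ∀ G : Set (Fin d → ℝ), IsFace P G → pdim G = 2 → IsTriangulation G (T G))
    (w : (Fin d → ℝ) → (Fin d → ℝ))
    (hw : ∀ u v : Fin d → ℝ, FrameEdge P T u v →
      ∑ j, (w u j - w v j) * (u j - v j) = 0) :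
    ∃ (S : (Fin d → ℝ) →ₗ[ℝ] (Fin d → ℝ)) (b : Fin d → ℝ),
      (∀ x y : Fin d → ℝ, ∑ j, S x j * y j = - ∑ j, x j * S y j) ∧
      ∀ v : Fin d → ℝ, IsFace P {v} → w v = S v + b :=
  infinitesimal_rigidity_general d P hP hdim T hT w hw
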